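/- arXiv:1803.02017 — 3 statements merged into one kernel-verified Lean document; each statement's English description precedes it below -/
import Mathlib

section
/- Let I ⊆ R be a squarefree monomial ideal and let f be a squarefree monomial of R. Then depth(R/(I : f)) ≥ depth(R/I). -/
/-!
The comparison is made through the ring endomorphism `φ : x_i ↦ x_i ^ 2` of `R`
(`MvPolynomial.expand 2`).

Write `f = x^a`, and let `ρ_a : R → R` (`decim`) be the additive map that sends `x^(2c + a)` to `x^c`
and kills all other monomials. It satisfies `ρ_a (φ g * h) = g * ρ_a h`. If `s` and `a`
are squarefree exponents, then `s ≤ 2c + a` holds exactly when `s ≤ c + a`. Consequently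
`g ↦ φ g * f` induces a map `R/(I : f) → R/I` which is linear along `φ`, and `ρ_a` induces a
left inverse of it: `R/(I : f)` is a direct summand of the restriction of scalars `φ_* (R/I)`.

The maps `ρ_ε`, for `ε` squarefree, also show that `φ` is flat (indeed `R` is free over `φ(R)` on
the squarefree monomials). Hence extension of scalars along `φ` is exact and preserves projectives,
and the adjunction between extension and restriction, with dimension shifting, shows that
`Ext^i(R/m, φ_* M)` vanishes as soon as `Ext^i(R ⊗_φ R/m, M)` does (`ext_adj`). Now `R ⊗_φ R/m` is
finitely generated and killed by a power of `m`, so a prime filtration of it has all its factors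
isomorphic to `R/m`; thus if `Ext^i(R/m, M) = 0` for all `i < d`, then `Ext^i(R ⊗_φ R/m, M) = 0` for
all `i < d` (`ext_torsion`). With `M = R/I` and the retraction above, the vanishing passes to
`Ext^i(R/m, R/(I : f))` (`ext_retract`), which is the inequality of depths.
-/

open MvPolynomial CategoryTheory Opposite

noncomputable section

/-- The polynomial ring `K[x_v : v ∈ σ]` over the field `K`. -/
abbrev MvPoly (K : Type) [Field K] (σ : Type) : Type := MvPolynomial σ K

variable (K : Type) [Field K] (σ : Type)

/-- The graded maximal ideal `m = (x_v : v ∈ σ)` generated by all the variables. -/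
def maxIdeal : Ideal (MvPoly K σ) := Ideal.span (Set.range MvPolynomial.X)

/-- The depth of `R/I` with respect to the graded maximal ideal, defined as
`inf { i | Ext^i(R/m, R/I) ≠ 0 }` (with value `⊤` for the zero module). -/
def depthQ (I : Ideal (MvPoly K σ)) : ℕ∞ :=
  sInf { d : ℕ∞ | ∃ i : ℕ, d = i ∧
    Nontrivial (((Ext (MvPoly K σ) (ModuleCat (MvPoly K σ)) i).obj
      (op (ModuleCat.of (MvPoly K σ) (MvPoly K σ ⧸ maxIdeal K σ)))).obj
      (ModuleCat.of (MvPoly K σ) (MvPoly K σ ⧸ I))) }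

variable {n : ℕ}

/-- The monomial `x^a`. -/
def mono (K : Type) [Field K] {n : ℕ} (a : Fin n →₀ ℕ) : MvPoly K (Fin n) :=
  MvPolynomial.monomial a 1

/-- A monomial ideal: an ideal generated by monomials. -/
def IsMonomialIdeal (I : Ideal (MvPoly K (Fin n))) : Prop :=
  ∃ S : Set (Fin n →₀ ℕ), I = Ideal.span (mono K '' S)

/-- A squarefree exponent vector. -/
def SqfreeExp (a : Fin n →₀ ℕ) : Prop := ∀ i, a i ≤ 1

/-- A squarefree monomial ideal: an ideal generated by squarefree monomials. -/
def IsSqfreeMonomialIdeal (I : Ideal (MvPoly K (Fin n))) : Prop :=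
  ∃ S : Set (Fin n →₀ ℕ), (∀ a ∈ S, SqfreeExp a) ∧ I = Ideal.span (mono K '' S)

end

/-! ### Vanishing of Ext -/

section
open Abelian Limits
universe w w' v v' u u'

/-- If `F ⊣ G` with `F` and `G` exact, then vanishing of `Ext^i(F X, Y)` implies vanishing of
`Ext^i(X, G Y)`. The proof is dimension shifting along an epimorphism from a projective to `X`, whose
image under `F` is again one. -/
theorem ext_adj {C : Type u} [Category.{v} C] [Abelian C] {D : Type u'} [Category.{v'} D] [Abelian D]
    [HasExt.{w} C] [HasExt.{w'} D] [EnoughProjectives C] {F : C ⥤ D} {G : D ⥤ C} (adj : F ⊣ G)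
    [G.Additive] [F.PreservesMonomorphisms] [G.PreservesEpimorphisms] (Y : D) (i : ℕ) :
    ∀ X : C, Subsingleton (Abelian.Ext (F.obj X) Y i) →
      Subsingleton (Abelian.Ext X (G.obj Y) i) := by
  have := adj.leftAdjoint_preservesColimits
  have := adj.left_adjoint_additive
  induction i with
  | zero =>
    intro X h
    have h' : Subsingleton (F.obj X ⟶ Y) := Ext.homEquiv₀.symm.subsingleton
    have : Subsingleton (X ⟶ G.obj Y) := (adj.homEquiv X Y).symm.subsingleton
    exact Ext.homEquiv₀.subsingleton
  | succ i ih =>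
    intro X h
    -- the short exact sequence `0 → Ω → P → X → 0` with `P` projective
    let S : ShortComplex C :=
      ShortComplex.mk (kernel.ι (Projective.π X)) (Projective.π X) (by simp)
    have hS : S.ShortExact := { exact := ShortComplex.exact_kernel (Projective.π X) }
    have hFS : (S.map F).ShortExact :=
      { exact := hS.exact.map_of_epi_of_preservesCokernel F hS.epi_g inferInstance
        mono_f := by have := hS.mono_f; exact inferInstanceAs (Mono (F.map S.f))
        epi_g := by have := hS.epi_g; exact inferInstanceAs (Epi (F.map S.g)) }
    have hP : Projective S.X₂ := Projective.projective_over X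
    have hFP : Projective (S.map F).X₂ := adj.map_projective _ hP
    refine subsingleton_of_forall_eq 0 fun x => ?_
    obtain ⟨x₁, rfl⟩ := Ext.contravariant_sequence_exact₃ hS _ x (Ext.eq_zero_of_projective _)
      (add_comm 1 i)
    have key : ∀ y : Ext (S.map F).X₁ Y i, ∃ z : Ext (S.map F).X₂ Y i,
        (Ext.mk₀ (S.map F).f).comp z (zero_add i) = y := fun y =>
      Ext.contravariant_sequence_exact₁ hFS _ y (add_comm 1 i) (@Subsingleton.elim _ h _ _)
    -- in degree `0`, `Ext` of a projective need not vanish, so lift along the adjunction by hand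
    cases i with
    | zero =>
      obtain ⟨u, rfl⟩ := (Ext.mk₀_bijective _ _).2 x₁
      obtain ⟨z, hz⟩ := key (Ext.mk₀ ((adj.homEquiv _ _).symm u))
      obtain ⟨z, rfl⟩ := (Ext.mk₀_bijective _ _).2 z
      rw [Ext.mk₀_comp_mk₀] at hz
      have hz' := (Ext.mk₀_bijective _ _).1 hz
      have : u = S.f ≫ adj.homEquiv _ _ z := by
        exact ((adj.homEquiv _ _).symm_apply_eq.1 hz'.symm).trans
          (adj.homEquiv_naturality_left S.f z)
      rw [this, ← Ext.mk₀_comp_mk₀, ← Ext.comp_assoc_of_second_deg_zero, hS.extClass_comp]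
      simp
    | succ i =>
      have : Subsingleton (Ext S.X₁ (G.obj Y) (i+1)) := ih _ <| subsingleton_of_forall_eq 0 fun y => by
        obtain ⟨z, rfl⟩ := key y
        rw [Ext.eq_zero_of_projective z]
        exact Ext.comp_zero _ _ _ _ _
      rw [Subsingleton.elim x₁ 0, Ext.comp_zero]

/-- Vanishing of the derived functor `Ext`, which defines the depth, agrees with vanishing of
`Abelian.Ext`, for which the long exact sequences are available: both are computed by a projective
resolution of `X`. -/
theorem old_iff {R : Type} [CommRing R] (X Y : ModuleCat.{0} R) (n : ℕ) :
    Subsingleton (((_root_.Ext R (ModuleCat R) n).obj (op X)).obj Y) ↔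
      Subsingleton (Abelian.Ext.{0} X Y n) := by
  let P := projectiveResolution X
  have e := (P.isoExt (R := R) n Y).toLinearEquiv.toEquiv.subsingleton_congr
  rw [e]
  rw [← ModuleCat.isZero_iff_subsingleton, ← HomologicalComplex.exactAt_iff_isZero_homology]
  cases n with
  | zero =>
    rw [HomologicalComplex.exactAt_iff' _ 0 0 1 (by simp) (by simp), ShortComplex.moduleCat_exact_iff]
    rw [← Ext.homEquiv₀.symm.subsingleton_congr]
    let π : P.complex.X 0 ⟶ X := P.π.f 0
    have hπ : P.complex.d 1 0 ≫ π = 0 := P.complex_d_comp_π_f_zero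
    have : Epi π := inferInstanceAs (Epi (P.π.f 0))
    have hex : (ShortComplex.mk _ _ hπ).Exact := P.exact₀
    have hd : P.complex.d 0 0 = 0 := P.complex.shape _ _ (by simp)
    constructor
    · intro h
      refine subsingleton_of_forall_eq 0 fun x => ?_
      have hx : P.complex.d 1 0 ≫ π ≫ x = 0 := by rw [← Category.assoc, hπ, zero_comp]
      obtain ⟨g, hg⟩ : ∃ g : P.complex.X 0 ⟶ Y, P.complex.d 0 0 ≫ g = π ≫ x := h (π ≫ x) hx
      rw [hd, zero_comp] at hg
      exact (cancel_epi π).1 (by rw [← hg, comp_zero])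
    · intro h (f : P.complex.X 0 ⟶ Y) (hf : P.complex.d 1 0 ≫ f = 0)
      have hf' : f = π ≫ hex.desc f hf := (hex.g_desc f hf).symm
      have h0 : hex.desc f hf = 0 := @Subsingleton.elim _ h _ _
      rw [h0, comp_zero] at hf'
      have : P.complex.d 0 0 ≫ (0 : P.complex.X 0 ⟶ Y) = f := by rw [hf', comp_zero]
      exact ⟨(0 : P.complex.X 0 ⟶ Y), this⟩
  | succ n =>
    rw [HomologicalComplex.exactAt_iff' _ n (n+1) (n+2) (by simp) (by simp), ShortComplex.moduleCat_exact_iff]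
    constructor
    · intro h
      refine subsingleton_of_forall_eq 0 fun x => ?_
      obtain ⟨f, hf, rfl⟩ := P.extMk_surjective x (n+2) rfl
      rw [P.extMk_eq_zero_iff _ _ _ _ n rfl]
      exact h f hf
    · intro h f hf
      exact (P.extMk_eq_zero_iff f (n+2) rfl hf n rfl).1 (Subsingleton.elim _ _)

/-- If `Ext^i(S/n, Y) = 0` for all `i < d`, the same holds with `S/n` replaced by any finitely
generated module `N` killed by a power of the maximal ideal `n`, by induction along a prime
filtration of `N`, whose factors are all `S/n`. -/
theorem ext_torsion {S : Type} [CommRing S] [IsNoetherianRing S] (n : Ideal S) [n.IsMaximal]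
    (Y : ModuleCat.{0} S) (d : ℕ)
    (h : ∀ i < d, Subsingleton (Abelian.Ext.{0} (ModuleCat.of S (S ⧸ n)) Y i))
    (N : Type) [AddCommGroup N] [Module S N] [hN : Module.Finite S N]
    (hn : n ≤ (Module.annihilator S N).radical) :
    ∀ i < d, Subsingleton (Abelian.Ext.{0} (ModuleCat.of S N) Y i) := by
  induction hN using IsNoetherianRing.induction_on_isQuotientEquivQuotientPrime S with
  | subsingleton N =>
    intro i hi
    have : IsZero (ModuleCat.of S N) := ModuleCat.isZero_of_subsingleton _
    refine subsingleton_of_forall_eq 0 fun x => ?_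
    rw [← Ext.mk₀_id_comp x, this.eq_of_src (𝟙 _) 0, Ext.mk₀_zero, Ext.zero_comp]
  | quotient N p e =>
    rw [e.annihilator_eq, Ideal.annihilator_quotient, p.2.radical] at hn
    obtain rfl := Ideal.IsMaximal.eq_of_le ‹_› p.2.ne_top hn
    intro i hi
    have := h i hi
    refine subsingleton_of_forall_eq 0 fun x => ?_
    have he : e.toModuleIso.hom ≫ e.toModuleIso.inv = 𝟙 _ := e.toModuleIso.hom_inv_id
    rw [← Ext.mk₀_id_comp x]
    rw [← he, ← Ext.mk₀_comp_mk₀]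
    rw [Ext.comp_assoc_of_second_deg_zero, Subsingleton.elim ((Ext.mk₀ e.toModuleIso.inv).comp x _) 0,
      Ext.comp_zero]
  | exact N₁ N₂ N₃ f g hf hg hfg h₁ h₃ =>
    have h₁ := h₁ (hn.trans (Ideal.radical_mono (LinearMap.annihilator_le_of_injective f hf)))
    have h₃ := h₃ (hn.trans (Ideal.radical_mono (LinearMap.annihilator_le_of_surjective g hg)))
    intro i hi
    have := h₁ i hi
    have := h₃ i hi
    let T : ShortComplex (ModuleCat.{0} S) :=
      ShortComplex.mk (ModuleCat.ofHom f) (ModuleCat.ofHom g) (by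
        ext x; exact hfg.apply_apply_eq_zero x)
    have hT : T.ShortExact :=
      { exact := (ShortComplex.ShortExact.moduleCat_exact_iff_function_exact T).2 hfg
        mono_f := (ModuleCat.mono_iff_injective _).2 hf
        epi_g := (ModuleCat.epi_iff_surjective _).2 hg }
    refine subsingleton_of_forall_eq 0 fun x => ?_
    obtain ⟨y, rfl⟩ := Ext.contravariant_sequence_exact₂ hT Y x
      (@Subsingleton.elim (Abelian.Ext.{0} (ModuleCat.of S N₁) Y i) _ _ _)
    have hy : y = 0 := @Subsingleton.elim (Abelian.Ext.{0} (ModuleCat.of S N₃) Y i) _ _ _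
    rw [hy, Ext.comp_zero]

open TensorProduct in
/-- Let `f : R → S` be flat with `n` contained in the radical of `m S`, and let the `R`-module `N` be a
direct summand of the restriction of scalars of the `S`-module `Y`. Then vanishing of
`Ext^i(S/n, Y)` for all `i < d` implies vanishing of `Ext^i(R/m, N)` for all `i < d`. -/
theorem ext_retract {R S : Type} [CommRing R] [CommRing S] [IsNoetherianRing S]
    (f : R →+* S) (hf : f.Flat) (m : Ideal R) (n : Ideal S) [n.IsMaximal]
    (hmn : n ≤ (m.map f).radical) (N Y : Type) [AddCommGroup N] [Module R N] [AddCommGroup Y]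
    [Module S Y] (s : N →ₛₗ[f] Y) (r : Y →+ N) (hr : ∀ a y, r (f a • y) = a • r y)
    (hrs : ∀ x, r (s x) = x) (d : ℕ)
    (h : ∀ i < d, Subsingleton (Abelian.Ext.{0} (ModuleCat.of S (S ⧸ n)) (ModuleCat.of S Y) i)) :
    ∀ i < d, Subsingleton (Abelian.Ext.{0} (ModuleCat.of R (R ⧸ m)) (ModuleCat.of R N) i) := by
  intro i hi
  have hmono : (ModuleCat.extendScalars f).PreservesMonomorphisms :=
    { preserves := fun {A B} g hg => by
        rw [ModuleCat.mono_iff_injective] at hg ⊢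
        algebraize [f]
        exact Module.Flat.lTensor_preserves_injective_linearMap (M := S) g.hom hg }
  have hepi : (ModuleCat.restrictScalars.{0} f).PreservesEpimorphisms :=
    { preserves := fun {A B} g hg => by
        rw [ModuleCat.epi_iff_surjective] at hg ⊢
        exact hg }
  have hT : Subsingleton (Abelian.Ext.{0}
      ((ModuleCat.extendScalars f).obj (ModuleCat.of R (R ⧸ m))) (ModuleCat.of S Y) i) := by
    algebraize [f]
    refine ext_torsion n _ d h (S ⊗[R] (R ⧸ m)) (hmn.trans (Ideal.radical_mono ?_)) i hi
    rw [Ideal.map_le_iff_le_comap]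
    intro a ha
    rw [Ideal.mem_comap, Module.mem_annihilator]
    intro t
    induction t with
    | zero => simp
    | add x y hx hy => rw [smul_add, hx, hy, add_zero]
    | tmul x y =>
      obtain ⟨y, rfl⟩ := Ideal.Quotient.mk_surjective y
      have : f a = algebraMap R S a := rfl
      rw [this, algebraMap_smul, ← TensorProduct.tmul_smul]
      have : a • (Ideal.Quotient.mk m y) = 0 := by
        rw [← Ideal.Quotient.mk_eq_mk, ← Submodule.Quotient.mk_smul, Submodule.Quotient.mk_eq_zero]
        exact m.mul_mem_right y ha
      rw [this, TensorProduct.tmul_zero]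
  have := ext_adj (ModuleCat.extendRestrictScalarsAdj f) (ModuleCat.of S Y) i _ hT
  let s' : ModuleCat.of R N ⟶ (ModuleCat.restrictScalars f).obj (ModuleCat.of S Y) :=
    ModuleCat.ofHom (Y := (ModuleCat.restrictScalars f).obj (ModuleCat.of S Y))
      { toFun := s, map_add' := s.map_add, map_smul' := fun a x => s.map_smulₛₗ a x }
  let r' : (ModuleCat.restrictScalars f).obj (ModuleCat.of S Y) ⟶ ModuleCat.of R N :=
    ModuleCat.ofHom (X := (ModuleCat.restrictScalars f).obj (ModuleCat.of S Y))
      { toFun := r, map_add' := r.map_add, map_smul' := hr }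
  have hsr : s' ≫ r' = 𝟙 _ := by ext x; exact hrs x
  refine subsingleton_of_forall_eq 0 fun x => ?_
  rw [← Ext.comp_mk₀_id x, ← hsr, ← Ext.mk₀_comp_mk₀, ← Ext.comp_assoc_of_second_deg_zero,
    Subsingleton.elim (x.comp (Ext.mk₀ s') _) 0, Ext.zero_comp]
end

/-! ### The substitution of squares and its splittings -/

/-- A ring map is flat if every `s` decomposes as `∑ j, f (ρ j s) * e j` with `R`-linear coordinate
maps `ρ j`, since `S` is then a direct summand of a finite free `R`-module. -/
theorem flat_of_split {R S ι : Type} [CommRing R] [CommRing S] [Fintype ι] (f : R →+* S)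
    (e : ι → S) (ρ : ι → S →+ R) (hρ : ∀ j a s, ρ j (f a * s) = a * ρ j s)
    (h : ∀ s, ∑ j, f (ρ j s) * e j = s) : f.Flat := by
  algebraize [f]
  have hf : ∀ a, algebraMap R S a = f a := fun _ => rfl
  let p : S →ₗ[R] ι → R :=
    { toFun := fun s j => ρ j s
      map_add' := fun x y => by ext j; simp
      map_smul' := fun a x => by ext j; simp [Algebra.smul_def, hf, hρ] }
  let q : (ι → R) →ₗ[R] S := Fintype.linearCombination R e
  refine Module.Flat.of_retract p q ?_
  ext s
  simp [p, q, Fintype.linearCombination_apply, Algebra.smul_def, hf, h]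

/-- The exponent vector with entries `⌊b i / 2⌋`. -/
noncomputable def halve {n : ℕ} (b : Fin n →₀ ℕ) : Fin n →₀ ℕ := b.mapRange (· / 2) rfl

/-- The `K`-linear map sending `x^(2c + a)` to `x^c` and all monomials not of this form to `0`, for
`a` squarefree (for other `a` it is `0`, as the remainders `b i % 2` cannot equal `a i`). -/
noncomputable def decim (K : Type) [Field K] {n : ℕ} (a : Fin n →₀ ℕ) :
    MvPoly K (Fin n) →ₗ[K] MvPoly K (Fin n) :=
  (basisMonomials (Fin n) K).constr K
    (fun b => if ∀ i, b i % 2 = a i then monomial (halve b) 1 else 0)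

section
variable {K : Type} [Field K] {n : ℕ}

theorem decim_monomial (a b : Fin n →₀ ℕ) (r : K) :
    decim K a (monomial b r) = if ∀ i, b i % 2 = a i then monomial (halve b) r else 0 := by
  have : (monomial b r : MvPoly K (Fin n)) = r • basisMonomials (Fin n) K b := by
    simp [smul_monomial]
  rw [this, map_smul, decim, Module.Basis.constr_basis]
  split_ifs <;> simp [smul_monomial]

theorem decim_expand_mul (a : Fin n →₀ ℕ) (g h : MvPoly K (Fin n)) :
    decim K a (expand 2 g * h) = g * decim K a h := by
  induction g using MvPolynomial.induction_on' with
  | add p q hp hq => rw [map_add, add_mul, map_add, hp, hq, add_mul]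
  | monomial c r =>
    induction h using MvPolynomial.induction_on' with
    | add p q hp hq => rw [mul_add, map_add, hp, hq, map_add, mul_add]
    | monomial b t =>
      rw [expand_monomial, monomial_mul, decim_monomial, decim_monomial]
      have h1 : (∀ i, (2 • c + b) i % 2 = a i) ↔ ∀ i, b i % 2 = a i := by
        simp
      have h2 : halve (2 • c + b) = c + halve b := by
        ext i
        simp only [halve, Finsupp.mapRange_apply, Finsupp.add_apply, Finsupp.smul_apply, smul_eq_mul]
        omega
      simp only [h1, h2]
      split_ifs
      · rw [monomial_mul]
      · rw [mul_zero]

theorem coeff_decim {a : Fin n →₀ ℕ} (ha : SqfreeExp a) (c : Fin n →₀ ℕ) (h : MvPoly K (Fin n)) :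
    coeff c (decim K a h) = coeff (2 • c + a) h := by
  induction h using MvPolynomial.induction_on' with
  | add p q hp hq => rw [map_add, coeff_add, hp, hq, coeff_add]
  | monomial b t =>
    have key : ((∀ i, b i % 2 = a i) ∧ halve b = c) ↔ b = 2 • c + a := by
      simp only [halve, Finsupp.ext_iff, Finsupp.mapRange_apply, Finsupp.add_apply,
        Finsupp.smul_apply, smul_eq_mul, ← forall_and]
      refine forall_congr' fun i => ?_
      have := ha i
      omega
    rw [decim_monomial, coeff_monomial]
    by_cases h1 : ∀ i, b i % 2 = a i
    · rw [if_pos h1, coeff_monomial]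
      simp only [← key, h1, true_and, implies_true]
    · rw [if_neg h1, if_neg (fun h => h1 (key.2 h).1), coeff_zero]

theorem decim_mono {a : Fin n →₀ ℕ} (ha : SqfreeExp a) : decim K a (mono K a) = 1 := by
  rw [mono, decim_monomial, if_pos (fun i => by have := ha i; omega)]
  have : halve a = 0 := by
    ext i
    have := ha i
    simp only [halve, Finsupp.mapRange_apply, Finsupp.coe_zero, Pi.zero_apply]
    omega
  rw [this]; rfl

/-- The substitution `x_i ↦ x_i ^ 2` is flat; the coordinates with respect to the squarefree
monomials are the decimation maps. -/
theorem expand_flat : (expand 2 : MvPoly K (Fin n) →ₐ[K] MvPoly K (Fin n)).toRingHom.Flat := by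
  classical
  let ε : Finset (Fin n) → Fin n →₀ ℕ := fun A => Finsupp.indicator A (fun _ _ => 1)
  have hε : ∀ A i, ε A i = if i ∈ A then 1 else 0 := fun A i => by simp [ε, Finsupp.indicator_apply]
  refine flat_of_split _ (fun A => mono K (ε A)) (fun A => (decim K (ε A)).toAddMonoidHom)
    (fun A g h => decim_expand_mul _ g h) fun h => ?_
  change ∑ A, expand 2 (decim K (ε A) h) * mono K (ε A) = h
  induction h using MvPolynomial.induction_on' with
  | add p q hp hq => simp only [map_add, add_mul, Finset.sum_add_distrib, hp, hq]
  | monomial b t =>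
    -- only the set of odd entries of `b` contributes
    rw [Finset.sum_eq_single (Finset.univ.filter fun i => b i % 2 = 1)]
    · rw [decim_monomial, if_pos (fun i => by rw [hε]; simp; split_ifs <;> omega), expand_monomial,
        mono, monomial_mul, mul_one]
      refine congrArg (fun e => monomial e t) ?_
      ext i
      simp only [halve, Finsupp.mapRange_apply, Finsupp.add_apply,
        Finsupp.smul_apply, smul_eq_mul, hε, Finset.mem_filter, Finset.mem_univ, true_and]
      split_ifs <;> omega
    · intro A _ hA
      rw [decim_monomial, if_neg, map_zero, zero_mul]
      intro hb
      refine hA ?_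
      ext i
      have := hb i
      rw [hε] at this
      simp only [Finset.mem_filter, Finset.mem_univ, true_and, this]
      split_ifs <;> simp_all
    · simp

theorem maxIdeal_isMaximal : (maxIdeal K (Fin n)).IsMaximal := by
  have : maxIdeal K (Fin n) = RingHom.ker (constantCoeff : MvPoly K (Fin n) →+* K) := by
    ext p
    have := mem_pow_idealOfVars_iff' (σ := Fin n) (R := K) 1 p
    rw [pow_one] at this
    rw [maxIdeal, RingHom.mem_ker]
    refine this.trans ?_
    simp [constantCoeff_eq, Finsupp.degree_eq_zero_iff]
  rw [this]
  exact RingHom.ker_isMaximal_of_surjective _ (fun x => ⟨C x, by simp⟩)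

/-- The square of each variable lies in the ideal generated by the image of `m`. -/
theorem maxIdeal_le : maxIdeal K (Fin n) ≤ ((maxIdeal K (Fin n)).map
    (expand 2 : MvPoly K (Fin n) →ₐ[K] MvPoly K (Fin n)).toRingHom).radical := by
  conv_lhs => rw [maxIdeal]
  rw [Ideal.span_le]
  rintro _ ⟨i, rfl⟩
  refine ⟨2, ?_⟩
  have := Ideal.mem_map_of_mem (expand 2 : MvPoly K (Fin n) →ₐ[K] MvPoly K (Fin n)).toRingHom
    (show (X i : MvPoly K (Fin n)) ∈ maxIdeal K (Fin n) from Ideal.subset_span ⟨i, rfl⟩)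
  simpa using this

theorem mul_mono_mem_iff {I : Ideal (MvPoly K (Fin n))} {S : Set (Fin n →₀ ℕ)}
    (hI : I = Ideal.span (mono K '' S)) (a : Fin n →₀ ℕ) (g : MvPoly K (Fin n)) :
    g * mono K a ∈ I ↔ ∀ c ∈ g.support, ∃ s ∈ S, s ≤ c + a := by
  have := mem_ideal_span_monomial_image (x := g * mono K a) (s := S)
  rw [hI]
  refine this.trans ?_
  simp only [mem_support_iff, mono]
  constructor
  · intro h c hc
    exact h (c + a) (by rwa [coeff_mul_monomial, mul_one])
  · intro h b hb
    rw [coeff_mul_monomial'] at hb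
    split_ifs at hb with hab
    · have := h (b - a) (by simpa using hb)
      rwa [tsub_add_cancel_of_le hab] at this
    · exact absurd rfl hb

/-- The point where squarefreeness enters: doubling `c` does not change which squarefree monomials
divide `x^c x^a`. -/
theorem sqfree_le_iff {s : Fin n →₀ ℕ} (hs : SqfreeExp s) (c a : Fin n →₀ ℕ) :
    s ≤ 2 • c + a ↔ s ≤ c + a := by
  simp only [Finsupp.le_def, Finsupp.add_apply, Finsupp.smul_apply, smul_eq_mul]
  refine forall_congr' fun i => ?_
  have := hs i
  omega

/-- `g ↦ φ g * x^a` maps `(I : x^a)` into `I`. -/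
theorem expand_mul_mono_mem {I : Ideal (MvPoly K (Fin n))} (hI : IsSqfreeMonomialIdeal K I)
    (a : Fin n →₀ ℕ) {g : MvPoly K (Fin n)} (hg : g * mono K a ∈ I) :
    expand 2 g * mono K a ∈ I := by
  classical
  obtain ⟨S, hS, hI⟩ := hI
  rw [mul_mono_mem_iff hI] at hg ⊢
  intro b hb
  rw [MvPolynomial.support_expand (p := 2) g (by norm_num), Finset.mem_image] at hb
  obtain ⟨c, hc, rfl⟩ := hb
  obtain ⟨s, hs, hsc⟩ := hg c hc
  exact ⟨s, hs, (sqfree_le_iff (hS s hs) c a).2 hsc⟩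

/-- The decimation map takes `I` into `(I : x^a)`. -/
theorem decim_mul_mono_mem {I : Ideal (MvPoly K (Fin n))} (hI : IsSqfreeMonomialIdeal K I)
    {a : Fin n →₀ ℕ} (ha : SqfreeExp a) {h : MvPoly K (Fin n)} (hh : h ∈ I) :
    decim K a h * mono K a ∈ I := by
  obtain ⟨S, hS, hI⟩ := hI
  rw [mul_mono_mem_iff hI]
  rw [hI] at hh
  have hh := (mem_ideal_span_monomial_image (x := h) (s := S)).1 hh
  intro c hc
  rw [mem_support_iff, coeff_decim ha, ← mem_support_iff] at hc
  obtain ⟨s, hs, hsc⟩ := hh _ hc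
  exact ⟨s, hs, (sqfree_le_iff (hS s hs) c a).1 hsc⟩
end

/-- For squarefree data, `R/(I : x^a)` is a direct summand of `R/I` restricted along `x_i ↦ x_i ^ 2`,
so vanishing of `Ext^i(R/m, R/I)` for all `i < d` is inherited by `R/(I : x^a)`. -/
theorem ext_colon {K : Type} [Field K] {n : ℕ} {I J : Ideal (MvPoly K (Fin n))}
    (hI : IsSqfreeMonomialIdeal K I) {a : Fin n →₀ ℕ} (ha : SqfreeExp a)
    (hJ : ∀ g, g ∈ J ↔ g * mono K a ∈ I) (d : ℕ)
    (h : ∀ i < d, Subsingleton (Abelian.Ext.{0}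
      (ModuleCat.of (MvPoly K (Fin n)) (MvPoly K (Fin n) ⧸ maxIdeal K (Fin n)))
      (ModuleCat.of (MvPoly K (Fin n)) (MvPoly K (Fin n) ⧸ I)) i)) :
    ∀ i < d, Subsingleton (Abelian.Ext.{0}
      (ModuleCat.of (MvPoly K (Fin n)) (MvPoly K (Fin n) ⧸ maxIdeal K (Fin n)))
      (ModuleCat.of (MvPoly K (Fin n)) (MvPoly K (Fin n) ⧸ J)) i) := by
  let φ : MvPoly K (Fin n) →+* MvPoly K (Fin n) :=
    (expand 2 : MvPoly K (Fin n) →ₐ[K] MvPoly K (Fin n)).toRingHom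
  let s₀ : MvPoly K (Fin n) →ₛₗ[φ] MvPoly K (Fin n) ⧸ I :=
    { toFun := fun g => Submodule.Quotient.mk (φ g * mono K a)
      map_add' := fun x y => by rw [map_add, add_mul, Submodule.Quotient.mk_add]
      map_smul' := fun x y => by
        rw [smul_eq_mul, map_mul, mul_assoc, ← smul_eq_mul, Submodule.Quotient.mk_smul] }
  let s : (MvPoly K (Fin n) ⧸ J) →ₛₗ[φ] MvPoly K (Fin n) ⧸ I :=
    Submodule.liftQ J s₀ fun g hg =>
      (Submodule.Quotient.mk_eq_zero I).2 (expand_mul_mono_mem hI a ((hJ g).1 hg))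
  let r : (MvPoly K (Fin n) ⧸ I) →+ MvPoly K (Fin n) ⧸ J :=
    QuotientAddGroup.map I.toAddSubgroup J.toAddSubgroup (decim K a).toAddMonoidHom
      fun g hg => (hJ _).2 (decim_mul_mono_mem hI ha hg)
  have hr_mk : ∀ g, r (Submodule.Quotient.mk g) = Submodule.Quotient.mk (decim K a g) :=
    fun g => rfl
  have hs_mk : ∀ g, s (Submodule.Quotient.mk g) = Submodule.Quotient.mk (φ g * mono K a) :=
    fun g => rfl
  have := maxIdeal_isMaximal (K := K) (n := n)
  refine ext_retract φ expand_flat (maxIdeal K (Fin n)) (maxIdeal K (Fin n)) maxIdeal_le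
    _ _ s r (fun g y => ?_) (fun x => ?_) d h
  · obtain ⟨y, rfl⟩ := Submodule.Quotient.mk_surjective _ y
    rw [← Submodule.Quotient.mk_smul, hr_mk, hr_mk, ← Submodule.Quotient.mk_smul]
    exact congrArg _ (decim_expand_mul a g y)
  · obtain ⟨x, rfl⟩ := Submodule.Quotient.mk_surjective _ x
    rw [hs_mk, hr_mk]
    refine congrArg _ ((decim_expand_mul a x _).trans ?_)
    rw [decim_mono ha, mul_one]

/-- if `I` is a squarefree monomial ideal and `f` a squarefree monomial,
then `depth R/(I : f) ≥ depth R/I`. -/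
theorem stmt0 (K : Type) [Field K] (n : ℕ) (I : Ideal (MvPoly K (Fin n)))
    (hI : IsSqfreeMonomialIdeal K I)
    (a : Fin n →₀ ℕ) (ha : SqfreeExp a) (f : MvPoly K (Fin n)) (hf : f = mono K a) :
    depthQ K (Fin n) (I.colon (Ideal.span {f})) ≥ depthQ K (Fin n) I := by
  subst hf
  have hJ : ∀ g, g ∈ I.colon (Ideal.span {mono K a} : Set (MvPoly K (Fin n))) ↔
      g * mono K a ∈ I := by
    intro g
    rw [Submodule.mem_colon]
    constructor
    · intro h
      exact h _ (Ideal.mem_span_singleton_self _)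
    · intro h p hp
      obtain ⟨q, rfl⟩ := Ideal.mem_span_singleton.1 hp
      rw [smul_eq_mul, ← mul_assoc]
      exact I.mul_mem_right q h
  refine le_sInf ?_
  rintro _ ⟨i, rfl, hi⟩
  by_contra hlt
  rw [← not_subsingleton_iff_nontrivial, old_iff] at hi
  refine hi (ext_colon hI ha hJ (i + 1) (fun j hj => ?_) i (Nat.lt_succ_self i))
  rw [← old_iff, ← not_nontrivial_iff_subsingleton]
  intro hne
  -- a nonzero `Ext` in degree `j ≤ i` bounds the depth of `R/I` by `i`
  have hle : depthQ K (Fin n) I ≤ (j : ℕ∞) := sInf_le ⟨j, rfl, hne⟩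
  exact hlt (hle.trans (by exact_mod_cast Nat.lt_succ_iff.1 hj))
end

section
/- Let I(C) ⊆ R be the edge ideal of a clutter C and let f = x_{i_1}⋯x_{i_k} be a squarefree monomial of R. Then: (i) ((I(C)^∨ : f))^∨ = I(C \ {x_{i_1},…,x_{i_k}}); (ii) ((I(C) : f))^∨ = I(C^∨ \ {x_{i_1},…,x_{i_k}}); (iii) for a single variable x_i, (I(C) + (x_i))^∨ = x_i · I(C \ {x_i})^∨. -/
/-!
For a clutter `C`, the squarefree monomial `x_s` lies in `I(C)` iff `s` contains an edge of `C`,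
and the edge ideal is determined by this upward closed family of sets (`Clutter.Hits`).
Each operation in the theorem acts on such families by a Boolean formula:

* duality: `s` contains an edge of `C^∨` iff `sᶜ` contains no edge of `C` (`Clutter.hits_dual`);
* colon by `x_T`: `x_s ∈ (I(C) : x_T)` iff `s ∪ T` contains an edge (`prod_mem_colon`);
* deletion of `T`: `s` contains an edge of `C \ T` iff `s \ T` contains an edge of `C`
  (`Clutter.hits_del`);
* adding a variable: `x_s ∈ I(C) + (x_i)` iff `s` contains an edge or `i ∈ s`.

The three formulas then reduce to De Morgan's law `(sᶜ ∪ T)ᶜ = s \ T`.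
-/

open MvPolynomial CategoryTheory Opposite

noncomputable section

variable (K : Type) [Field K] (σ : Type)

variable {n : ℕ}

/-- A clutter on the vertex set `Fin n`: a family of edges none of which contains another. -/
structure Clutter (n : ℕ) where
  edges : Finset (Finset (Fin n))
  antichain : ∀ e ∈ edges, ∀ f ∈ edges, e ⊆ f → e = f

namespace Clutter

variable {n : ℕ}

/-- The edge ideal of a clutter, generated by the squarefree monomials
`x_e = ∏_{i ∈ e} x_i` for the edges `e`. -/
def edgeIdeal (K : Type) [Field K] (C : Clutter n) : Ideal (MvPoly K (Fin n)) :=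
  Ideal.span ((fun e : Finset (Fin n) => ∏ i ∈ e, (MvPolynomial.X i : MvPoly K (Fin n))) ''
    ↑C.edges)

/-- `c` is a vertex cover of `C`: it meets every edge. -/
def IsCover (C : Clutter n) (c : Finset (Fin n)) : Prop :=
  ∀ e ∈ C.edges, ∃ i ∈ e, i ∈ c

/-- `c` is a minimal vertex cover of `C`. -/
def IsMinCover (C : Clutter n) (c : Finset (Fin n)) : Prop :=
  IsCover C c ∧ ∀ d ⊆ c, IsCover C d → d = c

open Classical in
/-- The clutter of minimal vertex covers (the Alexander dual clutter `C^∨`). -/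
def dual (C : Clutter n) : Clutter n where
  edges := Finset.univ.filter fun c => IsMinCover C c
  antichain := by
    intro e he f hf hef
    simp only [Finset.mem_filter] at he hf
    exact hf.2.2 e hef he.2.1

/-- The ideal of covers (Alexander dual ideal) of a clutter: the edge ideal of `C^∨`. -/
def coverIdeal (K : Type) [Field K] (C : Clutter n) : Ideal (MvPoly K (Fin n)) :=
  edgeIdeal K (dual C)

open Classical in
/-- Deletion `C ∖ V`: delete all edges of `C` that intersect `V`. -/
def del (C : Clutter n) (V : Finset (Fin n)) : Clutter n where
  edges := C.edges.filter fun e => ∀ i ∈ V, i ∉ e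
  antichain := by
    intro e he f hf hef
    simp only [Finset.mem_filter] at he hf
    exact C.antichain e he.1 f hf.1 hef

/-- All minimal vertex covers of `C` have the same cardinality. -/
def Unmixed (C : Clutter n) : Prop :=
  ∀ c d, IsMinCover C c → IsMinCover C d → c.card = d.card

/-- All edges of `C` have the same cardinality. -/
def Uniform (C : Clutter n) : Prop :=
  ∀ e ∈ C.edges, ∀ f ∈ C.edges, e.card = f.card

/-- The set covering polyhedron `Q(A) = {x ∈ ℝ^n : x ≥ 0, xA ≥ 1}` of the clutter. -/
def coverPolyhedron (C : Clutter n) : Set (Fin n → ℝ) :=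
  { x | (∀ i, 0 ≤ x i) ∧ ∀ e ∈ C.edges, 1 ≤ ∑ i ∈ e, x i }

/-- The set covering polyhedron is integral: all of its vertices (extreme points)
have integer coordinates. -/
def IntegralPolyhedron (C : Clutter n) : Prop :=
  ∀ x ∈ Set.extremePoints ℝ (coverPolyhedron C), ∀ i, ∃ z : ℤ, x i = (z : ℝ)

open Classical in
/-- The max-flow min-cut property: for every nonnegative integral vector `α` both sides of
the LP-duality equation `min{⟨α,x⟩ : x ≥ 0, xA ≥ 1} = max{⟨y,1⟩ : y ≥ 0, Ay ≤ α}`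
have integral optimum solutions. -/
def HasMFMC (C : Clutter n) : Prop :=
  ∀ α : Fin n → ℕ,
    ∃ x : Fin n → ℕ,
      ((fun i => (x i : ℝ)) ∈ coverPolyhedron C ∧
        ∀ z ∈ coverPolyhedron C, ∑ i, (α i : ℝ) * x i ≤ ∑ i, (α i : ℝ) * z i) ∧
    ∃ y : Finset (Fin n) → ℕ,
      ((∀ e, e ∉ C.edges → y e = 0) ∧
        (∀ i, ∑ e ∈ C.edges.filter (fun e => i ∈ e), y e ≤ α i) ∧
        (∀ y' : Finset (Fin n) → ℝ, (∀ e, 0 ≤ y' e) → (∀ e, e ∉ C.edges → y' e = 0) →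
          (∀ i, ∑ e ∈ C.edges.filter (fun e => i ∈ e), y' e ≤ (α i : ℝ)) →
          ∑ e ∈ C.edges, y' e ≤ ∑ e ∈ C.edges, (y e : ℝ))) ∧
      (∑ i, (α i : ℝ) * x i = ∑ e ∈ C.edges, (y e : ℝ))

end Clutter

open Classical in
/-- The unique clutter whose edge ideal is a given squarefree monomial ideal `I`:
its edges are the minimal supports of squarefree monomials belonging to `I`. -/
def clutterOf (K : Type) [Field K] {n : ℕ} (I : Ideal (MvPoly K (Fin n))) : Clutter n where
  edges := Finset.univ.filter fun e =>
    ((∏ i ∈ e, MvPolynomial.X i : MvPoly K (Fin n)) ∈ I ∧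
      ∀ f ⊆ e, (∏ i ∈ f, MvPolynomial.X i : MvPoly K (Fin n)) ∈ I → f = e)
  antichain := by
    intro e he f hf hef
    simp only [Finset.mem_filter] at he hf
    exact hf.2.2 e hef he.2.1

/-- The Alexander dual of a squarefree monomial ideal. -/
def idealDual (K : Type) [Field K] {n : ℕ} (I : Ideal (MvPoly K (Fin n))) :
    Ideal (MvPoly K (Fin n)) :=
  Clutter.coverIdeal K (clutterOf K I)

end

/-- `C.Hits s`: the set `s` contains an edge of `C`, i.e. the monomial `x_s` lies in `I(C)`. -/
def Clutter.Hits {n : ℕ} (C : Clutter n) (s : Finset (Fin n)) : Prop :=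
  ∃ e ∈ C.edges, e ⊆ s

lemma prod_X_eq_monomial (K : Type) [Field K] {n : ℕ} (s : Finset (Fin n)) :
    (∏ i ∈ s, MvPolynomial.X i : MvPoly K (Fin n)) =
      MvPolynomial.monomial (∑ i ∈ s, Finsupp.single i 1) 1 := by
  rw [MvPolynomial.monomial_sum_one]
  rfl

lemma sum_single_apply {n : ℕ} (s : Finset (Fin n)) (j : Fin n) :
    (∑ i ∈ s, Finsupp.single i 1 : Fin n →₀ ℕ) j = if j ∈ s then 1 else 0 := by
  rw [Finsupp.finsetSum_apply]
  simp [Finsupp.single_apply]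

/-- Membership of `x_s x_T` (not squarefree when `s` and `T` meet) in a squarefree monomial
ideal depends only on its support `s ∪ T`. -/
lemma prod_mul_prod_mem_span (K : Type) [Field K] {n : ℕ} (S : Set (Finset (Fin n)))
    (s T : Finset (Fin n)) :
    ((∏ i ∈ s, MvPolynomial.X i) * (∏ i ∈ T, MvPolynomial.X i) : MvPoly K (Fin n)) ∈
        Ideal.span ((fun e : Finset (Fin n) =>
          ∏ i ∈ e, (MvPolynomial.X i : MvPoly K (Fin n))) '' S) ↔
      ∃ e ∈ S, e ⊆ s ∪ T := by
  classical
  have hS : ((fun e : Finset (Fin n) => ∏ i ∈ e, (MvPolynomial.X i : MvPoly K (Fin n))) '' S) =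
      (fun a => MvPolynomial.monomial a (1 : K)) ''
        ((fun e : Finset (Fin n) => (∑ i ∈ e, Finsupp.single i 1 : Fin n →₀ ℕ)) '' S) := by
    rw [Set.image_image]
    exact Set.image_congr fun e _ => prod_X_eq_monomial K e
  rw [hS, MvPolynomial.mem_ideal_span_monomial_image, prod_X_eq_monomial, prod_X_eq_monomial,
    MvPolynomial.monomial_mul, MvPolynomial.support_monomial, if_neg (by simp)]
  simp only [Finset.mem_singleton, forall_eq, Set.exists_mem_image]
  refine exists_congr fun e => and_congr_right fun _ => ?_
  rw [Finsupp.le_def]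
  simp only [Finsupp.add_apply, sum_single_apply]
  refine forall_congr' fun j => ?_
  by_cases h1 : j ∈ e <;> by_cases h2 : j ∈ s <;> by_cases h3 : j ∈ T <;> simp [h1, h2, h3]

lemma prod_mem_span (K : Type) [Field K] {n : ℕ} (S : Set (Finset (Fin n)))
    (s : Finset (Fin n)) :
    (∏ i ∈ s, MvPolynomial.X i : MvPoly K (Fin n)) ∈
        Ideal.span ((fun e : Finset (Fin n) =>
          ∏ i ∈ e, (MvPolynomial.X i : MvPoly K (Fin n))) '' S) ↔
      ∃ e ∈ S, e ⊆ s := by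
  simpa using prod_mul_prod_mem_span K S s ∅

lemma prod_mem_edgeIdeal (K : Type) [Field K] {n : ℕ} (C : Clutter n) (s : Finset (Fin n)) :
    (∏ i ∈ s, MvPolynomial.X i : MvPoly K (Fin n)) ∈ C.edgeIdeal K ↔ C.Hits s :=
  prod_mem_span K _ s

lemma prod_mem_colon (K : Type) [Field K] {n : ℕ} (C : Clutter n) (s T : Finset (Fin n)) :
    (∏ i ∈ s, MvPolynomial.X i : MvPoly K (Fin n)) ∈
        (C.edgeIdeal K).colon
          (Ideal.span {(∏ i ∈ T, MvPolynomial.X i : MvPoly K (Fin n))}) ↔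
      C.Hits (s ∪ T) := by
  rw [Ideal.mem_colon_span_singleton]
  exact prod_mul_prod_mem_span K _ s T

lemma prod_mem_add (K : Type) [Field K] {n : ℕ} (C : Clutter n) (s : Finset (Fin n))
    (i : Fin n) :
    (∏ i ∈ s, MvPolynomial.X i : MvPoly K (Fin n)) ∈
        C.edgeIdeal K + Ideal.span {(MvPolynomial.X i : MvPoly K (Fin n))} ↔
      C.Hits s ∨ i ∈ s := by
  have h := prod_mem_span K ((C.edges : Set (Finset (Fin n))) ∪ {{i}}) s
  rw [Set.image_union, Ideal.span_union, Set.image_singleton, Finset.prod_singleton] at h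
  rw [Clutter.edgeIdeal, Submodule.add_eq_sup, h]
  simp [Clutter.Hits, or_and_right, exists_or, or_comm]

/-- In a finite Boolean lattice, every set satisfying `P` contains a minimal one. -/
lemma exists_minimal_subset {n : ℕ} (P : Finset (Fin n) → Prop) (s : Finset (Fin n)) (hs : P s) :
    ∃ e ⊆ s, P e ∧ ∀ f ⊆ e, P f → f = e := by
  obtain ⟨e, hes, he⟩ := exists_minimal_le_of_wellFoundedLT P s hs
  exact ⟨e, hes, he.prop, fun f hf hPf => le_antisymm hf (he.le_of_le hPf hf)⟩

lemma prod_mem_of_subset (K : Type) [Field K] {n : ℕ} (I : Ideal (MvPoly K (Fin n)))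
    {e s : Finset (Fin n)} (h : e ⊆ s)
    (he : (∏ i ∈ e, MvPolynomial.X i : MvPoly K (Fin n)) ∈ I) :
    (∏ i ∈ s, MvPolynomial.X i : MvPoly K (Fin n)) ∈ I :=
  I.mem_of_dvd (Finset.prod_dvd_prod_of_subset _ _ _ h) he

lemma hits_clutterOf (K : Type) [Field K] {n : ℕ} (I : Ideal (MvPoly K (Fin n)))
    (s : Finset (Fin n)) :
    (clutterOf K I).Hits s ↔ (∏ i ∈ s, MvPolynomial.X i : MvPoly K (Fin n)) ∈ I := by
  simp only [Clutter.Hits, clutterOf, Finset.mem_filter, Finset.mem_univ, true_and]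
  constructor
  · rintro ⟨e, ⟨he, -⟩, hes⟩
    exact prod_mem_of_subset K I hes he
  · intro h
    obtain ⟨e, hes, he⟩ := exists_minimal_subset
      (fun t => (∏ i ∈ t, MvPolynomial.X i : MvPoly K (Fin n)) ∈ I) s h
    exact ⟨e, he, hes⟩

namespace Clutter

/-- A set meets every edge iff its complement contains no edge, and it contains a minimal
cover iff it is a cover. -/
lemma hits_dual {n : ℕ} (C : Clutter n) (s : Finset (Fin n)) :
    C.dual.Hits s ↔ ¬ C.Hits sᶜ := by
  have key : C.dual.Hits s ↔ C.IsCover s := by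
    simp only [Hits, dual, Finset.mem_filter, Finset.mem_univ, true_and]
    constructor
    · rintro ⟨c, ⟨hc, -⟩, hcs⟩ e he
      obtain ⟨i, hi, hic⟩ := hc e he
      exact ⟨i, hi, hcs hic⟩
    · intro h
      obtain ⟨c, hcs, hc⟩ := exists_minimal_subset C.IsCover s h
      exact ⟨c, hc, hcs⟩
  rw [key]
  simp [IsCover, Hits, Finset.not_subset]

lemma hits_del {n : ℕ} (C : Clutter n) (T s : Finset (Fin n)) :
    (C.del T).Hits s ↔ C.Hits (s \ T) := by
  simp only [Hits, del, Finset.mem_filter, and_assoc]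
  refine exists_congr fun e => and_congr_right fun _ => ?_
  rw [Finset.subset_sdiff, Finset.disjoint_right, and_comm]

lemma edgeIdeal_le_of_hits (K : Type) [Field K] {n : ℕ} {C D : Clutter n}
    (h : ∀ s, C.Hits s → D.Hits s) : C.edgeIdeal K ≤ D.edgeIdeal K := by
  rw [edgeIdeal, Ideal.span_le]
  rintro _ ⟨e, he, rfl⟩
  exact (prod_mem_edgeIdeal K D e).2 (h e ⟨e, he, subset_rfl⟩)

lemma edgeIdeal_eq_of_hits (K : Type) [Field K] {n : ℕ} {C D : Clutter n}
    (h : ∀ s, C.Hits s ↔ D.Hits s) : C.edgeIdeal K = D.edgeIdeal K :=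
  le_antisymm (edgeIdeal_le_of_hits K fun s => (h s).1)
    (edgeIdeal_le_of_hits K fun s => (h s).2)

end Clutter

/-- The second duality formula; the first one is this applied to `C^∨`, since `C` and
`C^∨^∨` have the same edge ideal. -/
lemma idealDual_colon (K : Type) [Field K] {n : ℕ} (C : Clutter n) (T : Finset (Fin n)) :
    idealDual K ((C.edgeIdeal K).colon
        (Ideal.span {(∏ i ∈ T, MvPolynomial.X i : MvPoly K (Fin n))})) =
      (C.dual.del T).edgeIdeal K := by
  refine Clutter.edgeIdeal_eq_of_hits K fun s => ?_
  rw [Clutter.hits_dual, hits_clutterOf, prod_mem_colon, Clutter.hits_del, Clutter.hits_dual]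
  have : sᶜ ∪ T = (s \ T)ᶜ := by ext; simp; tauto
  rw [this]

lemma idealDual_add (K : Type) [Field K] {n : ℕ} (C : Clutter n) (i : Fin n) :
    idealDual K (C.edgeIdeal K + Ideal.span {(MvPolynomial.X i : MvPoly K (Fin n))}) =
      Ideal.span {(MvPolynomial.X i : MvPoly K (Fin n))} * (C.del {i}).coverIdeal K := by
  have hL : ∀ s, (clutterOf K (C.edgeIdeal K +
      Ideal.span {(MvPolynomial.X i : MvPoly K (Fin n))})).dual.Hits s ↔
      ¬ C.Hits sᶜ ∧ i ∈ s := by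
    intro s
    rw [Clutter.hits_dual, hits_clutterOf, prod_mem_add]
    simp
  have hR : ∀ s, (C.del {i}).dual.Hits s ↔ ¬ C.Hits (sᶜ \ {i}) := fun s => by
    rw [Clutter.hits_dual, Clutter.hits_del]
  apply le_antisymm
  · rw [idealDual, Clutter.coverIdeal, Clutter.edgeIdeal, Ideal.span_le]
    rintro _ ⟨e, he, rfl⟩
    obtain ⟨h1, h2⟩ := (hL e).1 ⟨e, he, subset_rfl⟩
    change (∏ j ∈ e, MvPolynomial.X j : MvPoly K (Fin n)) ∈ _
    rw [← Finset.mul_prod_erase e _ h2]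
    refine Ideal.mul_mem_mul (Ideal.mem_span_singleton_self _) ?_
    refine (prod_mem_edgeIdeal K _ _).2 ((hR _).2 ?_)
    have : (e.erase i)ᶜ \ {i} = eᶜ := by ext j; by_cases hj : j = i <;> simp_all
    rwa [this]
  · rw [Clutter.coverIdeal, Clutter.edgeIdeal, Ideal.span_mul_span', Ideal.span_le]
    rintro _ ⟨_, rfl, _, ⟨e, he, rfl⟩, rfl⟩
    have h1 := (hR e).1 ⟨e, he, subset_rfl⟩
    have h2 : (∏ j ∈ insert i e, MvPolynomial.X j : MvPoly K (Fin n)) ∈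
        idealDual K (C.edgeIdeal K + Ideal.span {(MvPolynomial.X i : MvPoly K (Fin n))}) := by
      refine (prod_mem_edgeIdeal K _ _).2 ((hL _).2 ⟨?_, by simp⟩)
      have : (insert i e)ᶜ = eᶜ \ {i} := by ext j; simp; tauto
      rwa [this]
    -- Divisibility suffices, so there is no need to know that `i ∉ e`.
    refine Ideal.mem_of_dvd _ ?_ h2
    by_cases hi : i ∈ e
    · rw [Finset.insert_eq_of_mem hi]
      exact dvd_mul_left _ _
    · rw [Finset.prod_insert hi]

/-- duality formulas for edge ideals of clutters. -/
theorem stmt1 (K : Type) [Field K] (n : ℕ) (C : Clutter n) (T : Finset (Fin n))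
    (f : MvPoly K (Fin n)) (hf : f = ∏ i ∈ T, MvPolynomial.X i) :
    (idealDual K ((Clutter.coverIdeal K C).colon (Ideal.span {f})) =
        Clutter.edgeIdeal K (C.del T)) ∧
    (idealDual K ((Clutter.edgeIdeal K C).colon (Ideal.span {f})) =
        Clutter.edgeIdeal K ((Clutter.dual C).del T)) ∧
    (∀ i : Fin n,
      idealDual K (Clutter.edgeIdeal K C + Ideal.span {(MvPolynomial.X i : MvPoly K (Fin n))}) =
        Ideal.span {(MvPolynomial.X i : MvPoly K (Fin n))} * Clutter.coverIdeal K (C.del {i})) := by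
  subst hf
  refine ⟨?_, idealDual_colon K C T, idealDual_add K C⟩
  rw [Clutter.coverIdeal, idealDual_colon]
  refine Clutter.edgeIdeal_eq_of_hits K fun s => ?_
  simp [Clutter.hits_del, Clutter.hits_dual]
end

section
/- Let I ⊆ R be a squarefree monomial ideal and let f = x_{i_1}⋯x_{i_k} be a squarefree monomial of degree k. Then the following five conditions are equivalent to one another, and all of them hold: (i) depth(R/(I + (f))) ≥ depth(R/I) − 1; (ii) depth(R/I) ≤ depth(R/(I : f)); (iii) depth(R/(I + (x_{i_1},…,x_{i_k}))) ≥ depth(R/I) − k; (iv) reg(R/I) ≥ reg(R/(I : f)); (v) reg(R/(I + (f))) ≤ reg(R/I) + k − 1. -/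
/-!
Write `f = x^T` with `T` a set of variables. Everything is deduced from the two comparisons between
`R/I` and `R/(I : f)`.

*Depth.* Let `φ : R → R` be the flat map `x_i ↦ x_i²`. As a module over itself through `φ`, the ring
is free on the squarefree monomials, and for a squarefree monomial ideal `I` the map `g ↦ φ(g) f`
makes `R/(I : f)` a direct summand of `φ_* (R/I)` (`exists_retract`). By adjunction
(`subsingleton_ext_of_adj`), the vanishing of `Ext^i(R/m, φ_* (R/I))` follows from that of
`Ext^i(φ^* (R/m), R/I)`, and `φ^* (R/m)` is supported at `m`; hence depth cannot drop
(`depthQ_le_depthQ_colon`). The long exact sequence of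
`0 → R/(I : f) → R/I → R/(I + (f)) → 0` gives (i), and (iii) follows by adding the variables of `f`
one at a time.

*Regularity.* `Reg k M r` says that the graded module `M` has `k` steps of a free resolution with
`F_i` generated in degrees at most `r + i`; the horseshoe lemma and a Schanuel argument
(`Reg.horseshoe`, `Reg.cone`, `Reg.indep`) show that this condition does not depend on choices and
behaves well in short exact sequences. For a monomial ideal, `R/I` is also graded by the exponent of
a variable `x`, and multiplication by `x` identifies `R/(I : x)(-1)` with the part of `R/I` of positive
`x`-degree. Taking the positive part is exact and sends a bigraded free module to a free one, a
generator `e` of `x`-degree zero being replaced by `x e`, so it raises the bound by at most one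
(`Reg.trunc`); thus `reg R/(I : x) ≤ reg R/I`, and iterating gives (iv). The mapping cone of the
short exact sequence above gives (v). Finally, a monomial ideal with finitely many generators has
some bound (`exists_reg`), and a proper one has no negative bound (`nonneg_of_reg`), so
that the least bound in the definition of the regularity exists.
-/

open MvPolynomial CategoryTheory Opposite

noncomputable section

variable (K : Type) [Field K] (σ : Type)

/-- The degree-`e` homogeneous component condition, for an integer `e`
(for `e < 0` the component is zero). -/
def HomogComp (e : ℤ) (p : MvPoly K σ) : Prop :=
  if 0 ≤ e then p ∈ homogeneousSubmodule σ K e.toNat else p = 0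

/-- `v` is a homogeneous element of degree `e` of the graded free module
`⊕_j R(-dg j)`. -/
def IsHomogVec {m : ℕ} (dg : Fin m → ℤ) (e : ℤ) (v : Fin m → MvPoly K σ) : Prop :=
  ∀ j, HomogComp K σ (e - dg j) (v j)

/-- The degree-`e` homogeneous component of `R/I`. -/
def QuotComp (I : Ideal (MvPoly K σ)) (e : ℤ) : Submodule K (MvPoly K σ ⧸ I) :=
  if 0 ≤ e then
    Submodule.map (Ideal.Quotient.mkₐ K I).toLinearMap (homogeneousSubmodule σ K e.toNat)
  else ⊥

/-- A graded free resolution of `R/I` by finitely generated graded free modules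
`F i = ⊕_{j < rk i} R(-dg i j)`, with degree preserving (degree zero) maps. -/
structure GradedFreeRes (I : Ideal (MvPoly K σ)) where
  rk : ℕ → ℕ
  dg : (i : ℕ) → Fin (rk i) → ℤ
  dmap : (i : ℕ) → ((Fin (rk (i + 1)) → MvPoly K σ) →ₗ[MvPoly K σ] (Fin (rk i) → MvPoly K σ))
  aug : (Fin (rk 0) → MvPoly K σ) →ₗ[MvPoly K σ] (MvPoly K σ ⧸ I)
  aug_surj : Function.Surjective aug
  exact0 : Function.Exact (dmap 0) aug
  exactS : ∀ i, Function.Exact (dmap (i + 1)) (dmap i)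
  graded : ∀ i (e : ℤ) v, IsHomogVec K σ (dg (i + 1)) e v → IsHomogVec K σ (dg i) e (dmap i v)
  aug_graded : ∀ (e : ℤ) v, IsHomogVec K σ (dg 0) e v → aug v ∈ QuotComp K σ I e

/-- `R/I` admits a graded free resolution all of whose twists `dg i j` satisfy
`dg i j - i ≤ r`. -/
def ResBound (I : Ideal (MvPoly K σ)) (r : ℤ) : Prop :=
  ∃ F : GradedFreeRes K σ I, ∀ i j, F.dg i j - i ≤ r

open Classical in
/-- The Castelnuovo–Mumford regularity of `R/I`: the least `r` bounding the twists of
a graded free resolution of `R/I` (with the convention `⊥ = -∞` for the zero module). -/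
def CMreg (I : Ideal (MvPoly K σ)) : WithBot ℤ :=
  if h : ∃ r : ℤ, ResBound K σ I r ∧ ∀ s : ℤ, ResBound K σ I s → r ≤ s
  then ((h.choose : ℤ) : WithBot ℤ) else ⊥

variable {n : ℕ}

end

/-! ### Ext groups and depth -/

section Depth

/-- Vanishing of the `Ext` groups defined by projective resolutions is the same as vanishing of the
`Ext` groups of the derived category, for which both long exact sequences are available. -/
theorem subsingleton_ext_iff (R : Type) [CommRing R] (X Y : ModuleCat.{0} R) (i : ℕ) :
    Subsingleton (((Ext R (ModuleCat R) i).obj (op X)).obj Y) ↔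
      Subsingleton (Abelian.Ext X Y i) := by
  let P := projectiveResolution X
  have h1 : Subsingleton (((Ext R (ModuleCat R) i).obj (op X)).obj Y) ↔
      ∀ f : P.complex.X i ⟶ Y, P.complex.d (i + 1) i ≫ f = 0 →
        ∃ g : P.complex.X ((ComplexShape.up ℕ).prev i) ⟶ Y,
          P.complex.d i ((ComplexShape.up ℕ).prev i) ≫ g = f := by
    rw [← ModuleCat.isZero_iff_subsingleton, (P.isoExt i Y).isZero_iff,
      ← HomologicalComplex.exactAt_iff_isZero_homology,
      HomologicalComplex.exactAt_iff' _ _ i (i + 1) rfl (by simp),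
      ShortComplex.moduleCat_exact_iff]
    rfl
  rw [h1]
  rcases i with _ | i
  · have hd : ∀ j, P.complex.d 0 j = 0 := fun j => P.complex.shape _ _ (by simp)
    simp only [hd, Limits.zero_comp]
    rw [(Abelian.Ext.homEquiv₀ (X := X) (Y := Y)).subsingleton_congr]
    let π : P.complex.X 0 ⟶ X := P.π.f 0
    have hπ : Epi π := inferInstanceAs (Epi (P.π.f 0))
    have hdπ : P.complex.d (0 + 1) 0 ≫ π = 0 := P.complex_d_comp_π_f_zero
    constructor
    · intro h
      refine ⟨fun a b => ?_⟩
      have key : ∀ a : X ⟶ Y, a = 0 := by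
        intro a
        obtain ⟨g, hg⟩ := h (π ≫ a) (by rw [← Category.assoc, hdπ, Limits.zero_comp])
        rw [← cancel_epi π, ← hg, Limits.comp_zero]
      rw [key a, key b]
    · intro h f hf
      refine ⟨0, ?_⟩
      have ex := P.exact₀
      have hepi : Epi (P.π.f 0) := inferInstance
      have e := ex.g_desc f hf
      have hz : (ex.desc f hf : X ⟶ Y) = 0 := h.elim _ _
      rw [← e]
      refine Eq.trans ?_ (congrArg (fun t : X ⟶ Y => π ≫ t) hz).symm
      exact Limits.comp_zero.symm
  · have hp : (ComplexShape.up ℕ).prev (i + 1) = i := by simp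
    rw [hp]
    constructor
    · intro h
      refine ⟨fun a b => ?_⟩
      have key : ∀ a : Abelian.Ext X Y (i + 1), a = 0 := by
        intro a
        obtain ⟨f, hf, rfl⟩ := P.extMk_surjective a (i + 2) rfl
        exact (P.extMk_eq_zero_iff f _ rfl hf i rfl).2 (h f hf)
      rw [key a, key b]
    · intro h f hf
      exact (P.extMk_eq_zero_iff f _ rfl hf i rfl).1 (Subsingleton.elim _ _)

theorem le_depthQ_iff (K : Type) [Field K] (σ : Type) (I : Ideal (MvPoly K σ)) (d : ℕ∞) :
    d ≤ depthQ K σ I ↔ ∀ i : ℕ, (i : ℕ∞) < d →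
      Subsingleton (Abelian.Ext (ModuleCat.of (MvPoly K σ) (MvPoly K σ ⧸ maxIdeal K σ))
        (ModuleCat.of (MvPoly K σ) (MvPoly K σ ⧸ I)) i) := by
  simp only [← subsingleton_ext_iff]
  unfold depthQ
  rw [le_sInf_iff]
  constructor
  · intro h i hi
    by_contra hc
    rw [not_subsingleton_iff_nontrivial] at hc
    exact absurd (h i ⟨i, rfl, hc⟩) (not_le.2 hi)
  · rintro h _ ⟨i, rfl, hi⟩
    by_contra hc
    exact absurd (h i (not_le.1 hc)) (not_subsingleton_iff_nontrivial.2 hi)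

/-- An exact functor `G` with an exact left adjoint `F` satisfies
`Ext^i(F X, M) = 0 → Ext^i(X, G M) = 0`; dimension shifting along injective presentations of `M`. -/
theorem subsingleton_ext_of_adj {A B : Type} [CommRing A] [CommRing B]
    (F : ModuleCat.{0} A ⥤ ModuleCat.{0} B) (G : ModuleCat.{0} B ⥤ ModuleCat.{0} A) (adj : F ⊣ G)
    [F.PreservesMonomorphisms] [G.Additive] [Limits.PreservesFiniteLimits G]
    [Limits.PreservesFiniteColimits G]
    (X : ModuleCat.{0} A) (i : ℕ) : ∀ (M : ModuleCat.{0} B),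
      Subsingleton (Abelian.Ext (F.obj X) M i) → Subsingleton (Abelian.Ext X (G.obj M) i) := by
  induction i with
  | zero =>
    intro M h
    rw [(Abelian.Ext.homEquiv₀).subsingleton_congr] at h ⊢
    exact ((adj.homEquiv X M).subsingleton_congr).1 h
  | succ i ih =>
    intro M h
    let S : ShortComplex (ModuleCat.{0} B) :=
      ShortComplex.mk (Injective.ι M) (Limits.cokernel.π (Injective.ι M)) (by simp)
    have hS : S.ShortExact :=
      { exact := ShortComplex.exact_cokernel _ }
    have hS' : (S.map G).ShortExact := hS.map_of_exact G
    have inj : Injective (G.obj (Injective.under M)) := Injective.injective_of_adjoint adj _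
    refine ⟨fun a b => ?_⟩
    have key : ∀ a : Abelian.Ext X (G.obj M) (i + 1), a = 0 := by
      intro a
      obtain ⟨x, rfl⟩ := Abelian.Ext.covariant_sequence_exact₁ X hS' (n₁ := i + 1) a
        (@Abelian.Ext.eq_zero_of_injective _ _ _ _ X (G.obj (Injective.under M)) i inj _) rfl
      rcases i with _ | i
        -- the degree-zero class `x` comes from a map which lifts to the injective module
      · obtain ⟨f, rfl⟩ := (Abelian.Ext.mk₀_bijective X (S.map G).X₃).2 x
        let f' : F.obj X ⟶ S.X₃ := (adj.homEquiv X S.X₃).symm f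
        obtain ⟨y, hy⟩ := Abelian.Ext.covariant_sequence_exact₃ (F.obj X) hS
          (Abelian.Ext.mk₀ f') (n₁ := 1) rfl (h.elim _ _)
        obtain ⟨g, rfl⟩ := (Abelian.Ext.mk₀_bijective (F.obj X) S.X₂).2 y
        rw [Abelian.Ext.mk₀_comp_mk₀] at hy
        have hg := (Abelian.Ext.mk₀_bijective _ _).1 hy
        have : f = adj.homEquiv X S.X₂ g ≫ (S.map G).g := by
          have : f = adj.homEquiv X S.X₃ f' := ((adj.homEquiv X S.X₃).apply_symm_apply f).symm
          rw [this, ← hg, Adjunction.homEquiv_naturality_right]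
          rfl
        have e1 : Abelian.Ext.mk₀ f = (Abelian.Ext.mk₀ (adj.homEquiv X S.X₂ g)).comp
            (Abelian.Ext.mk₀ (S.map G).g) (zero_add 0) := by
          rw [this]
          exact (Abelian.Ext.mk₀_comp_mk₀ _ _).symm
        rw [e1]
        refine (Abelian.Ext.comp_assoc_of_second_deg_zero _ _ _ _).trans ?_
        exact (congrArg (fun t => (Abelian.Ext.mk₀ (adj.homEquiv X S.X₂ g)).comp t (zero_add 1))
          hS'.comp_extClass).trans (Abelian.Ext.comp_zero ..)
      · have h2 : Subsingleton (Abelian.Ext (F.obj X) S.X₃ (i + 1)) := by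
          refine ⟨fun u v => ?_⟩
          have : ∀ u : Abelian.Ext (F.obj X) S.X₃ (i + 1), u = 0 := by
            intro u
            obtain ⟨y, rfl⟩ := Abelian.Ext.covariant_sequence_exact₃ (F.obj X) hS u
              (n₁ := i + 2) rfl (h.elim _ _)
            have : y = 0 := Abelian.Ext.eq_zero_of_injective (I := Injective.under M) y
            rw [this, Abelian.Ext.zero_comp]
          rw [this u, this v]
        have h3 := ih S.X₃ h2
        have : x = 0 := h3.elim _ _
        rw [this]
        exact Abelian.Ext.zero_comp ..
    rw [key a, key b]

end Depth

/-! ### The flat map `x_i ↦ x_i²` -/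

section Depth2

/-- A ring homomorphism `f : A → B` such that `B` is a free `A`-module with finite basis `b` is flat;
the basis is given by its coordinate functions `ρ`. -/
theorem flat_of_coordinates {A B : Type} [CommRing A] [CommRing B] (f : A →+* B)
    {ι : Type} [Fintype ι] (b : ι → B) (ρ : ι → B →+ A)
    (h1 : ∀ g, ∑ i, f (ρ i g) * b i = g) (h2 : ∀ i p g, ρ i (f p * g) = p * ρ i g) : f.Flat := by
  algebraize [f]
  let u : B →ₗ[A] (ι → A) :=
    { toFun := fun g i => ρ i g
      map_add' := fun x y => by ext i; simp
      map_smul' := fun p g => by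
        ext i
        simp only [Algebra.smul_def, RingHom.id_apply, Pi.smul_apply, Algebra.algebraMap_self]
        exact h2 i p g }
  let v : (ι → A) →ₗ[A] B := ∑ i, (LinearMap.toSpanSingleton A B (b i)).comp (LinearMap.proj i)
  have huv : v ∘ₗ u = LinearMap.id := by
    ext g
    simp only [LinearMap.comp_apply, LinearMap.id_apply, v, u, LinearMap.sum_apply,
      LinearMap.toSpanSingleton_apply, LinearMap.proj_apply, LinearMap.coe_mk, AddHom.coe_mk,
      Algebra.smul_def]
    exact h1 g
  have : Module.Projective A B := Module.Projective.of_split u v huv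
  exact inferInstanceAs (Module.Flat A B)

theorem finite_extendScalars {A B : Type} [CommRing A] [CommRing B] (f : A →+* B)
    (X : ModuleCat.{0} A) [Module.Finite A X] :
    Module.Finite B ((ModuleCat.extendScalars f).obj X) := by
  algebraize [f]
  exact inferInstanceAs (Module.Finite B (TensorProduct A B X))

theorem mem_annihilator_extendScalars {A B : Type} [CommRing A] [CommRing B] (f : A →+* B)
    (X : ModuleCat.{0} A) (a : A) (ha : ∀ x : X, a • x = 0) :
    f a ∈ Module.annihilator B ((ModuleCat.extendScalars f).obj X) := by
  algebraize [f]
  suffices h : f a ∈ Module.annihilator B (TensorProduct A B X) from h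
  rw [Module.mem_annihilator]
  intro t
  induction t with
  | zero => simp
  | add x y hx hy => rw [smul_add, hx, hy, add_zero]
  | tmul b x =>
    have : f a • b = a • b := by rw [Algebra.smul_def]; rfl
    rw [TensorProduct.smul_tmul', this, TensorProduct.smul_tmul, ha, TensorProduct.tmul_zero]

theorem subsingleton_ext_of_retract {A : Type} [CommRing A] (X M N : ModuleCat.{0} A) (i : ℕ)
    (u : N ⟶ M) (v : M ⟶ N) (huv : u ≫ v = 𝟙 N) (h : Subsingleton (Abelian.Ext X M i)) :
    Subsingleton (Abelian.Ext X N i) := by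
  have key : ∀ a : Abelian.Ext X N i, a = 0 := by
    intro a
    have : a = (a.comp (Abelian.Ext.mk₀ u) (add_zero i)).comp (Abelian.Ext.mk₀ v) (add_zero i) := by
      rw [Abelian.Ext.comp_assoc_of_third_deg_zero, Abelian.Ext.mk₀_comp_mk₀, huv,
        Abelian.Ext.comp_mk₀_id]
    rw [this, h.elim (a.comp (Abelian.Ext.mk₀ u) (add_zero i)) 0, Abelian.Ext.zero_comp]
  exact ⟨fun a b => by rw [key a, key b]⟩

end Depth2

section Monomials
variable {K : Type} [Field K] {n : ℕ}

theorem mem_span_mono (S : Set (Fin n →₀ ℕ)) (p : MvPoly K (Fin n)) :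
    p ∈ Ideal.span (mono K '' S) ↔ ∀ a ∈ p.support, ∃ s ∈ S, s ≤ a :=
  MvPolynomial.mem_ideal_span_monomial_image

/-- The exponent vector of the squarefree monomial with support `T`. -/
noncomputable def sqExp (T : Finset (Fin n)) : Fin n →₀ ℕ :=
  Finsupp.equivFunOnFinite.symm fun i => if i ∈ T then 1 else 0

theorem sqExp_apply (T : Finset (Fin n)) (i : Fin n) : sqExp T i = if i ∈ T then 1 else 0 := rfl

theorem prod_X_eq_mono (T : Finset (Fin n)) :
    (∏ i ∈ T, MvPolynomial.X i : MvPoly K (Fin n)) = mono K (sqExp T) := by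
  have : sqExp T = ∑ i ∈ T, Finsupp.single i 1 := by
    ext j
    simp [sqExp_apply, Finsupp.finsetSum_apply, Finsupp.single_apply]
  rw [this, mono, MvPolynomial.monomial_sum_one]
  rfl

/-- `ρ_T`: the projection of `K[x]` onto the summand `x^T K[x²]`, followed by
`x^T p(x²) ↦ p(x)`. -/
noncomputable def sqCoord (T : Finset (Fin n)) : MvPoly K (Fin n) →ₗ[K] MvPoly K (Fin n) :=
  open Classical in
  (MvPolynomial.basisMonomials (Fin n) K).constr K fun a =>
    if (∀ i, a i % 2 = sqExp T i) then monomial (a.mapRange (· / 2) rfl) 1 else 0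

open Classical in
theorem sqCoord_monomial (T : Finset (Fin n)) (a : Fin n →₀ ℕ) (c : K) :
    sqCoord T (monomial a c) =
      if (∀ i, a i % 2 = sqExp T i) then monomial (a.mapRange (· / 2) rfl) c else 0 := by
  have h : (monomial a c : MvPoly K (Fin n)) = c • MvPolynomial.basisMonomials (Fin n) K a := by
    simp [MvPolynomial.smul_monomial]
  rw [h, map_smul, sqCoord, Module.Basis.constr_basis]
  split_ifs <;> simp [MvPolynomial.smul_monomial]

theorem coeff_sqCoord (T : Finset (Fin n)) (g : MvPoly K (Fin n)) (b : Fin n →₀ ℕ) :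
    coeff b (sqCoord T g) = coeff (sqExp T + 2 • b) g := by
  classical
  induction g using MvPolynomial.induction_on' with
  | add p q hp hq => simp [hp, hq]
  | monomial a c =>
    rw [sqCoord_monomial]
    by_cases h : a = sqExp T + 2 • b
    · have h1 : ∀ i, a i % 2 = sqExp T i := fun i => by
        rw [h]; simp [sqExp_apply]; split_ifs <;> omega
      have h2 : a.mapRange (· / 2) rfl = b := by
        ext i; rw [Finsupp.mapRange_apply, h]; simp [sqExp_apply]; split_ifs <;> omega
      rw [if_pos h1, h2, coeff_monomial, coeff_monomial, if_pos rfl, if_pos h]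
    · rw [coeff_monomial, if_neg h]
      split_ifs with h1
      · rw [coeff_monomial, if_neg]
        rintro rfl
        apply h
        ext i
        have := h1 i
        simp only [Finsupp.add_apply, Finsupp.smul_apply, Finsupp.mapRange_apply, smul_eq_mul]
        omega
      · simp

theorem sqCoord_expand_mul (T : Finset (Fin n)) (p g : MvPoly K (Fin n)) :
    sqCoord T (expand 2 p * g) = p * sqCoord T g := by
  classical
  induction p using MvPolynomial.induction_on' with
  | add p q hp hq => simp [add_mul, hp, hq]
  | monomial a c =>
    induction g using MvPolynomial.induction_on' with
    | add p q hp hq => rw [mul_add, map_add, hp, hq, map_add, mul_add]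
    | monomial b d =>
      have e : expand 2 (monomial a c : MvPoly K (Fin n)) = monomial (2 • a) c := by
        exact expand_monomial _ _ _
      rw [e, monomial_mul, sqCoord_monomial, sqCoord_monomial]
      have h1 : (∀ i, (2 • a + b) i % 2 = sqExp T i) ↔ ∀ i, b i % 2 = sqExp T i := by
        refine forall_congr' fun i => ?_
        simp
      simp only [h1]
      split_ifs
      · rw [monomial_mul]
        refine congrArg (fun t => monomial t _) ?_
        ext i
        simp only [Finsupp.add_apply, Finsupp.smul_apply, Finsupp.mapRange_apply, smul_eq_mul]
        omega
      · simp

/-- `R` is free over `K[x_1²,…,x_n²]` on the squarefree monomials. -/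
theorem sum_sqCoord (g : MvPoly K (Fin n)) :
    ∑ T : Finset (Fin n), expand 2 (sqCoord T g) * mono K (sqExp T) = g := by
  classical
  induction g using MvPolynomial.induction_on' with
  | add p q hp hq => simp only [map_add, add_mul, Finset.sum_add_distrib, hp, hq]
  | monomial a c =>
    have key : ∀ T : Finset (Fin n), (∀ i, a i % 2 = sqExp T i) ↔
        T = Finset.univ.filter (fun i => a i % 2 = 1) := by
      intro T
      rw [Finset.ext_iff]
      refine forall_congr' fun i => ?_
      simp only [sqExp_apply, Finset.mem_filter, Finset.mem_univ, true_and]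
      split_ifs with h
      · simp [h]
      · simp only [h, false_iff]; omega
    simp only [sqCoord_monomial]
    rw [Finset.sum_eq_single (Finset.univ.filter (fun i => a i % 2 = 1))]
    · rw [if_pos ((key _).2 rfl), expand_monomial, mono, monomial_mul, mul_one]
      refine congrArg (fun t => monomial t c) ?_
      ext i
      have := (key _).2 rfl i
      simp only [Finsupp.add_apply, Finsupp.smul_apply, Finsupp.mapRange_apply, smul_eq_mul]
      omega
    · intro T _ hT
      rw [if_neg (fun h => hT ((key T).1 h))]
      simp
    · simp

theorem expand_two_flat : ((expand 2 : MvPoly K (Fin n) →ₐ[K] MvPoly K (Fin n)) :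
    MvPoly K (Fin n) →+* MvPoly K (Fin n)).Flat :=
  flat_of_coordinates _ (fun T => mono K (sqExp T)) (fun T => (sqCoord T).toAddMonoidHom)
    (fun g => sum_sqCoord g) (fun T p g => sqCoord_expand_mul T p g)

theorem mem_colon_span (I : Ideal (MvPoly K (Fin n))) (f p : MvPoly K (Fin n)) :
    p ∈ I.colon (Ideal.span {f}) ↔ p * f ∈ I := by
  rw [Submodule.mem_colon]
  constructor
  · intro h
    exact h f (Ideal.mem_span_singleton_self f)
  · intro h s hs
    obtain ⟨q, rfl⟩ := Ideal.mem_span_singleton'.1 hs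
    have : p • (q * f) = q * (p * f) := by simp only [smul_eq_mul]; ring
    rw [this]
    exact I.mul_mem_left _ h

theorem mul_mono_mem (S : Set (Fin n →₀ ℕ)) (b : Fin n →₀ ℕ) (p : MvPoly K (Fin n)) :
    p * mono K b ∈ Ideal.span (mono K '' S) ↔ ∀ a ∈ p.support, ∃ s ∈ S, s ≤ a + b := by
  rw [mem_span_mono]
  constructor
  · intro h a ha
    apply h
    rw [mem_support_iff] at ha ⊢
    rw [mono, coeff_mul_monomial, mul_one]
    exact ha
  · intro h a ha
    have : ∃ c ∈ p.support, a = c + b := by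
      classical
      rw [mem_support_iff, mono, coeff_mul_monomial'] at ha
      split_ifs at ha with hb
      · refine ⟨a - b, ?_, (tsub_add_cancel_of_le hb).symm⟩
        rw [mem_support_iff]; simpa using ha
      · exact absurd rfl ha
    obtain ⟨c, hc, rfl⟩ := this
    exact h c hc

/-- Squarefreeness of the generators enters here: if `x^s` with `s` squarefree divides `x^(T + 2 b)`,
it already divides `x^(T + b)`. -/
theorem sqCoord_mem {S : Set (Fin n →₀ ℕ)} (hS : ∀ a ∈ S, SqfreeExp a) (T : Finset (Fin n))
    (g : MvPoly K (Fin n)) (hg : g ∈ Ideal.span (mono K '' S)) :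
    sqCoord T g * mono K (sqExp T) ∈ Ideal.span (mono K '' S) := by
  rw [mul_mono_mem]
  intro b hb
  rw [mem_support_iff, coeff_sqCoord, ← mem_support_iff] at hb
  obtain ⟨s, hs, hle⟩ := (mem_span_mono S g).1 hg _ hb
  refine ⟨s, hs, fun i => ?_⟩
  have h1 := hle i
  have h2 := hS s hs i
  simp only [Finsupp.add_apply, Finsupp.smul_apply, smul_eq_mul] at h1 ⊢
  omega

theorem expand_mul_mem (S : Set (Fin n →₀ ℕ)) (b : Fin n →₀ ℕ)
    (g : MvPoly K (Fin n)) (hg : g * mono K b ∈ Ideal.span (mono K '' S)) :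
    expand 2 g * mono K b ∈ Ideal.span (mono K '' S) := by
  classical
  rw [mul_mono_mem] at hg ⊢
  intro a ha
  have : ∃ c ∈ g.support, a = 2 • c := by
    have := support_expand_subset g ha
    rw [Finset.mem_image] at this
    obtain ⟨c, hc, rfl⟩ := this
    exact ⟨c, hc, rfl⟩
  obtain ⟨c, hc, rfl⟩ := this
  obtain ⟨s, hs, hle⟩ := hg c hc
  refine ⟨s, hs, fun i => (hle i).trans ?_⟩
  simp only [Finsupp.add_apply, Finsupp.smul_apply, smul_eq_mul]
  omega

theorem sqCoord_expand_mul_mono (T : Finset (Fin n)) (g : MvPoly K (Fin n)) :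
    sqCoord T (expand 2 g * mono K (sqExp T)) = g := by
  rw [sqCoord_expand_mul, mono, sqCoord_monomial, if_pos]
  · have : (sqExp T).mapRange (· / 2) rfl = 0 := by
      ext i; rw [Finsupp.mapRange_apply, sqExp_apply]; split_ifs <;> simp
    rw [this]; simp
  · intro i; rw [sqExp_apply]; split_ifs <;> simp

end Monomials

/-! ### Depth of colon ideals and sums -/

section Depth3
variable {K : Type} [Field K] {n : ℕ}

/-- If `g ↦ φ(g) t` and its left inverse `ρ` descend to maps between `A/J` and `A/I`, then `A/J` is a
direct summand of `A/I` regarded as a module via `φ`. -/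
theorem exists_retract_of_maps {A : Type} [CommRing A] (φ : A →+* A) (I J : Ideal A) (t : A)
    (ρ : A →+ A) (h1 : ∀ g ∈ J, φ g * t ∈ I) (h2 : ∀ g ∈ I, ρ g ∈ J)
    (h3 : ∀ p g, ρ (φ p * g) = p * ρ g) (h4 : ∀ g, ρ (φ g * t) = g) :
    ∃ (u : ModuleCat.of A (A ⧸ J) ⟶ (ModuleCat.restrictScalars φ).obj (ModuleCat.of A (A ⧸ I)))
      (v : (ModuleCat.restrictScalars φ).obj (ModuleCat.of A (A ⧸ I)) ⟶ ModuleCat.of A (A ⧸ J)),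
      u ≫ v = 𝟙 _ := by
  let u₀ : A ⧸ J →+ A ⧸ I :=
    QuotientAddGroup.map J.toAddSubgroup I.toAddSubgroup
      ((AddMonoidHom.mulRight t).comp φ.toAddMonoidHom) h1
  let v₀ : A ⧸ I →+ A ⧸ J := QuotientAddGroup.map I.toAddSubgroup J.toAddSubgroup ρ h2
  have hu : ∀ g, u₀ (Ideal.Quotient.mk J g) = Ideal.Quotient.mk I (φ g * t) := fun g => rfl
  have hv : ∀ g, v₀ (Ideal.Quotient.mk I g) = Ideal.Quotient.mk J (ρ g) := fun g => rfl
  refine ⟨ModuleCat.ofHom (Y := (ModuleCat.restrictScalars φ).obj (ModuleCat.of A (A ⧸ I)))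
      { toFun := u₀, map_add' := u₀.map_add, map_smul' := ?_ },
    ModuleCat.ofHom (X := (ModuleCat.restrictScalars φ).obj (ModuleCat.of A (A ⧸ I))) (Y := A ⧸ J)
      { toFun := v₀, map_add' := v₀.map_add, map_smul' := ?_ }, ?_⟩
  · intro r x
    obtain ⟨g, rfl⟩ := Ideal.Quotient.mk_surjective x
    show u₀ (Ideal.Quotient.mk J (r * g)) = Ideal.Quotient.mk I (φ r * (φ g * t))
    rw [hu, φ.map_mul, mul_assoc]
  · intro r x
    obtain ⟨g, rfl⟩ := Ideal.Quotient.mk_surjective (I := I) x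
    show v₀ (Ideal.Quotient.mk I (φ r * g)) = Ideal.Quotient.mk J (r * ρ g)
    rw [hv, h3]
  · refine ModuleCat.hom_ext (LinearMap.ext fun x => ?_)
    obtain ⟨g, rfl⟩ := Ideal.Quotient.mk_surjective x
    show v₀ (u₀ (Ideal.Quotient.mk J g)) = Ideal.Quotient.mk J g
    rw [hu, hv, h4]

/-- `R/(I : x^T)` is a direct summand of `R/I`, regarded as a module via `x_i ↦ x_i²`. -/
theorem exists_retract {S : Set (Fin n →₀ ℕ)} (hS : ∀ a ∈ S, SqfreeExp a) (T : Finset (Fin n))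
    (I : Ideal (MvPoly K (Fin n))) (hI : I = Ideal.span (mono K '' S)) :
    ∃ (u : ModuleCat.of (MvPoly K (Fin n))
          (MvPoly K (Fin n) ⧸ I.colon (Ideal.span {mono K (sqExp T)})) ⟶
        (ModuleCat.restrictScalars
          ((expand 2 : MvPoly K (Fin n) →ₐ[K] MvPoly K (Fin n)) :
            MvPoly K (Fin n) →+* MvPoly K (Fin n))).obj
          (ModuleCat.of (MvPoly K (Fin n)) (MvPoly K (Fin n) ⧸ I)))
      (v : (ModuleCat.restrictScalars
          ((expand 2 : MvPoly K (Fin n) →ₐ[K] MvPoly K (Fin n)) :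
            MvPoly K (Fin n) →+* MvPoly K (Fin n))).obj
          (ModuleCat.of (MvPoly K (Fin n)) (MvPoly K (Fin n) ⧸ I)) ⟶
        ModuleCat.of (MvPoly K (Fin n))
          (MvPoly K (Fin n) ⧸ I.colon (Ideal.span {mono K (sqExp T)}))),
      u ≫ v = 𝟙 _ := by
  refine exists_retract_of_maps _ _ _ (mono K (sqExp T)) (sqCoord T).toAddMonoidHom ?_ ?_
    (sqCoord_expand_mul T) (sqCoord_expand_mul_mono T)
  · intro g hg
    have hg' : g * mono K (sqExp T) ∈ I := (mem_colon_span I _ g).1 hg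
    rw [hI] at hg' ⊢
    exact expand_mul_mem S _ g hg'
  · intro g hg
    rw [mem_colon_span]
    rw [hI] at hg ⊢
    exact sqCoord_mem hS T g hg

theorem subsingleton_ext_of_subsingleton {A : Type} [CommRing A] (X Y : ModuleCat.{0} A) (i : ℕ)
    (h : Subsingleton Y) : Subsingleton (Abelian.Ext X Y i) := by
  have hz : 𝟙 Y = 0 := (ModuleCat.isZero_of_subsingleton Y).eq_of_src _ _
  have key : ∀ a : Abelian.Ext X Y i, a = 0 := by
    intro a
    rw [← Abelian.Ext.comp_mk₀_id a, hz, Abelian.Ext.mk₀_zero, Abelian.Ext.comp_zero]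
  exact ⟨fun a b => by rw [key a, key b]⟩

theorem span_mono_le_maxIdeal (S : Set (Fin n →₀ ℕ)) (h : Ideal.span (mono K '' S) ≠ ⊤) :
    Ideal.span (mono K '' S) ≤ maxIdeal K (Fin n) := by
  rw [Ideal.span_le]
  rintro _ ⟨a, ha, rfl⟩
  by_cases h0 : a = 0
  · exfalso
    apply h
    rw [Ideal.eq_top_iff_one]
    exact Ideal.subset_span ⟨a, ha, by rw [h0]; rfl⟩
  · obtain ⟨i, hi⟩ := Finsupp.ne_iff.1 h0
    have : mono K a = mono K (a - Finsupp.single i 1) * X i := by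
      rw [mono, mono, X, monomial_mul, mul_one, tsub_add_cancel_of_le]
      intro j
      rw [Finsupp.single_apply]
      split_ifs with hj
      · subst hj; exact Nat.one_le_iff_ne_zero.2 hi
      · exact Nat.zero_le _
    rw [this]
    exact Ideal.mul_mem_left _ _ (Ideal.subset_span ⟨i, rfl⟩)

theorem maxIdeal_ne_top : maxIdeal K (Fin n) ≠ ⊤ := by
  intro h
  have h2 : maxIdeal K (Fin n) ≤ RingHom.ker (constantCoeff (R := K) (σ := Fin n)) := by
    rw [maxIdeal, Ideal.span_le]
    rintro _ ⟨i, rfl⟩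
    simp
  have h1 : (1 : MvPoly K (Fin n)) ∈ RingHom.ker (constantCoeff (R := K) (σ := Fin n)) :=
    h2 (h ▸ Submodule.mem_top)
  simp at h1

/-- Through the retraction `exists_retract` and adjunction, `Ext^i(R/m, R/(I : x^T))` is controlled by
`Ext^i(N, R/I)` for `N` the base change of `R/m` along `x_i ↦ x_i²`. As `N` is annihilated by the
`x_i²`, this vanishes for `i` below the length of a regular sequence on `R/I` in `m`. -/
theorem depthQ_le_depthQ_colon (I : Ideal (MvPoly K (Fin n))) (hI : IsSqfreeMonomialIdeal K I)
    (T : Finset (Fin n)) :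
    depthQ K (Fin n) I ≤ depthQ K (Fin n) (I.colon (Ideal.span {mono K (sqExp T)})) := by
  obtain ⟨S, hS, hIS⟩ := hI
  rw [le_depthQ_iff]
  intro i hi
  obtain ⟨u, v, huv⟩ := exists_retract hS T I hIS
  refine subsingleton_ext_of_retract _ _ _ i u v huv ?_
  set φ := ((expand 2 : MvPoly K (Fin n) →ₐ[K] MvPoly K (Fin n)) :
            MvPoly K (Fin n) →+* MvPoly K (Fin n)) with hφ
  by_cases hT : I = ⊤
  · apply subsingleton_ext_of_subsingleton
    show Subsingleton (MvPoly K (Fin n) ⧸ I)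
    exact Ideal.Quotient.subsingleton_iff.2 hT
  have hle : I ≤ maxIdeal K (Fin n) := by
    rw [hIS] at hT ⊢
    exact span_mono_le_maxIdeal S hT
  have := ModuleCat.preservesFiniteLimits_extendScalars_of_flat (expand_two_flat (K := K) (n := n))
  apply subsingleton_ext_of_adj (ModuleCat.extendScalars φ) (ModuleCat.restrictScalars φ)
    (ModuleCat.extendRestrictScalarsAdj φ)
  have hlt : maxIdeal K (Fin n) • (⊤ : Submodule (MvPoly K (Fin n))
      (ModuleCat.of (MvPoly K (Fin n)) (MvPoly K (Fin n) ⧸ I))) < ⊤ := by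
    rw [lt_top_iff_ne_top]
    intro htop
    apply maxIdeal_ne_top (K := K) (n := n)
    rw [Ideal.eq_top_iff_one]
    have h1 : (Ideal.Quotient.mk I 1) ∈ maxIdeal K (Fin n) • (⊤ : Submodule (MvPoly K (Fin n))
      (MvPoly K (Fin n) ⧸ I)) := by
      have : (maxIdeal K (Fin n) • (⊤ : Submodule (MvPoly K (Fin n))
        (MvPoly K (Fin n) ⧸ I))) = ⊤ := htop
      rw [this]; trivial
    have h2 : maxIdeal K (Fin n) • (⊤ : Submodule (MvPoly K (Fin n)) (MvPoly K (Fin n) ⧸ I)) ≤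
        Submodule.map I.mkQ (maxIdeal K (Fin n)) := by
      rw [Submodule.smul_le]
      intro r hr x _
      obtain ⟨g, rfl⟩ := Ideal.Quotient.mk_surjective x
      exact ⟨r * g, Ideal.mul_mem_right _ _ hr, rfl⟩
    obtain ⟨g, hg, hge⟩ := h2 h1
    have h3 : g - 1 ∈ I := Ideal.Quotient.eq.1 hge
    have : (1 : MvPoly K (Fin n)) = g - (g - 1) := by ring
    rw [this]
    exact Ideal.sub_mem _ hg (hle h3)
  have hfinK : Module.Finite (MvPoly K (Fin n))
    (ModuleCat.of (MvPoly K (Fin n)) (MvPoly K (Fin n) ⧸ maxIdeal K (Fin n))) :=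
    inferInstanceAs (Module.Finite _ (MvPoly K (Fin n) ⧸ maxIdeal K (Fin n)))
  have hfinI : Module.Finite (MvPoly K (Fin n))
    (ModuleCat.of (MvPoly K (Fin n)) (MvPoly K (Fin n) ⧸ I)) :=
    inferInstanceAs (Module.Finite _ (MvPoly K (Fin n) ⧸ I))
  obtain ⟨rs, hlen, hmem, hreg⟩ := ModuleCat.exists_isRegular_of_exists_subsingleton_ext
    (maxIdeal K (Fin n)) (i + 1) (ModuleCat.of (MvPoly K (Fin n)) (MvPoly K (Fin n) ⧸ I)) hlt
    (ModuleCat.of (MvPoly K (Fin n)) (MvPoly K (Fin n) ⧸ maxIdeal K (Fin n)))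
    (by
      show Module.support _ (MvPoly K (Fin n) ⧸ maxIdeal K (Fin n)) = _
      rw [Module.support_eq_zeroLocus, Ideal.annihilator_quotient])
    (fun j hj => (le_depthQ_iff K (Fin n) I (depthQ K (Fin n) I)).1 le_rfl j
      (lt_of_le_of_lt (by exact_mod_cast Nat.lt_succ_iff.1 hj) hi))
  have hfin := finite_extendScalars φ
    (ModuleCat.of (MvPoly K (Fin n)) (MvPoly K (Fin n) ⧸ maxIdeal K (Fin n)))
  refine ModuleCat.subsingleton_ext_of_exists_isRegular (maxIdeal K (Fin n)) _ ?_ _ hlt rs hmem hreg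
    i (by omega)
  rw [Module.support_eq_zeroLocus, PrimeSpectrum.zeroLocus_subset_zeroLocus_iff, maxIdeal,
    Ideal.span_le]
  rintro _ ⟨j, rfl⟩
  refine ⟨2, ?_⟩
  have : (X j : MvPoly K (Fin n)) ^ 2 = φ (X j) := by
    rw [hφ]; simp
  rw [this]
  apply mem_annihilator_extendScalars
  intro x
  obtain ⟨g, rfl⟩ := Ideal.Quotient.mk_surjective (I := maxIdeal K (Fin n)) x
  exact Ideal.Quotient.eq_zero_iff_mem.2
    (Ideal.mul_mem_right g _ (Ideal.subset_span ⟨j, rfl⟩))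

/-- The exact sequence `0 → R/(I : f) → R/I → R/(I + (f)) → 0`. -/
theorem depthQ_add_of_colon (I : Ideal (MvPoly K (Fin n))) (f : MvPoly K (Fin n))
    (h : depthQ K (Fin n) I ≤ depthQ K (Fin n) (I.colon (Ideal.span {f}))) :
    depthQ K (Fin n) I - 1 ≤ depthQ K (Fin n) (I + Ideal.span {f}) := by
  rw [le_depthQ_iff]
  intro i hi
  have hi' : ((i + 1 : ℕ) : ℕ∞) < depthQ K (Fin n) I := by
    push_cast
    exact lt_tsub_iff_right.1 hi
  let u : MvPoly K (Fin n) ⧸ I.colon (Ideal.span {f}) →ₗ[MvPoly K (Fin n)] MvPoly K (Fin n) ⧸ I :=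
    Submodule.mapQ _ _ (LinearMap.mulRight (MvPoly K (Fin n)) f)
      (fun p hp => (mem_colon_span I f p).1 hp)
  let v : MvPoly K (Fin n) ⧸ I →ₗ[MvPoly K (Fin n)] MvPoly K (Fin n) ⧸ (I + Ideal.span {f}) :=
    Submodule.factor le_sup_left
  let S : ShortComplex (ModuleCat (MvPoly K (Fin n))) :=
    ShortComplex.mk (ModuleCat.ofHom u) (ModuleCat.ofHom v) (by
      refine ModuleCat.hom_ext (LinearMap.ext fun x => ?_)
      obtain ⟨g, rfl⟩ := Ideal.Quotient.mk_surjective x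
      exact Ideal.Quotient.eq_zero_iff_mem.2
        (Ideal.mem_sup_right (Ideal.mul_mem_left _ g (Ideal.mem_span_singleton_self f))))
  have hS : S.ShortExact :=
    { exact := by
        rw [ShortComplex.moduleCat_exact_iff]
        intro x hx
        obtain ⟨g, rfl⟩ := Ideal.Quotient.mk_surjective (I := I) x
        have : g ∈ I + Ideal.span {f} := Ideal.Quotient.eq_zero_iff_mem.1 hx
        obtain ⟨a, ha, b, hb, rfl⟩ := Submodule.mem_sup.1 this
        obtain ⟨q, rfl⟩ := Ideal.mem_span_singleton'.1 hb
        refine ⟨Ideal.Quotient.mk _ q, ?_⟩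
        show Ideal.Quotient.mk I (q * f) = Ideal.Quotient.mk I (a + q * f)
        rw [map_add, Ideal.Quotient.eq_zero_iff_mem.2 ha, zero_add]
      mono_f := by
        rw [ModuleCat.mono_iff_injective]
        show Function.Injective u
        rw [injective_iff_map_eq_zero]
        intro x hx
        obtain ⟨g, rfl⟩ := Ideal.Quotient.mk_surjective x
        have : g * f ∈ I := Ideal.Quotient.eq_zero_iff_mem.1 hx
        exact Ideal.Quotient.eq_zero_iff_mem.2 ((mem_colon_span I f g).2 this)
      epi_g := by
        rw [ModuleCat.epi_iff_surjective]
        show Function.Surjective v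
        intro x
        obtain ⟨g, rfl⟩ := Ideal.Quotient.mk_surjective x
        exact ⟨Ideal.Quotient.mk I g, rfl⟩ }
  have key : ∀ a : Abelian.Ext (ModuleCat.of (MvPoly K (Fin n))
      (MvPoly K (Fin n) ⧸ maxIdeal K (Fin n))) S.X₃ i, a = 0 := by
    intro a
    have h1 := (le_depthQ_iff K (Fin n) _ _).1 h (i + 1) hi'
    obtain ⟨y, rfl⟩ := Abelian.Ext.covariant_sequence_exact₃ _ hS a (n₁ := i + 1) rfl (h1.elim _ _)
    have h2 := (le_depthQ_iff K (Fin n) I _).1 le_rfl i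
      (lt_trans (by exact_mod_cast Nat.lt_succ_self i) hi')
    rw [show y = 0 from h2.elim _ _, Abelian.Ext.zero_comp]
  exact ⟨fun a b => (key a).trans (key b).symm⟩

theorem isSqfree_add_X (I : Ideal (MvPoly K (Fin n))) (hI : IsSqfreeMonomialIdeal K I)
    (i : Fin n) : IsSqfreeMonomialIdeal K (I + Ideal.span {X i}) := by
  obtain ⟨S, hS, rfl⟩ := hI
  refine ⟨S ∪ {Finsupp.single i 1}, ?_, ?_⟩
  · rintro a (ha | rfl)
    · exact hS a ha
    · intro j
      rw [Finsupp.single_apply]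
      split_ifs <;> simp
  · rw [Set.image_union, Ideal.span_union, Set.image_singleton]
    rfl

theorem X_eq_mono_sqExp (i : Fin n) : (X i : MvPoly K (Fin n)) = mono K (sqExp {i}) := by
  rw [← prod_X_eq_mono, Finset.prod_singleton]

/-- Adding one variable at a time, each lowering the depth by at most one. -/
theorem depthQ_add_vars (T : Finset (Fin n)) : ∀ (I : Ideal (MvPoly K (Fin n))),
    IsSqfreeMonomialIdeal K I → depthQ K (Fin n) I - (T.card : ℕ∞) ≤
      depthQ K (Fin n) (I + Ideal.span ((fun i => (X i : MvPoly K (Fin n))) '' ↑T)) := by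
  classical
  induction T using Finset.induction_on with
  | empty =>
    intro I _
    simp
  | insert i T hi ih =>
    intro I hI
    have h1 : depthQ K (Fin n) I - 1 ≤ depthQ K (Fin n) (I + Ideal.span {X i}) := by
      apply depthQ_add_of_colon
      rw [X_eq_mono_sqExp]
      exact depthQ_le_depthQ_colon I hI {i}
    have h2 := ih _ (isSqfree_add_X I hI i)
    have e : I + Ideal.span ((fun i => (X i : MvPoly K (Fin n))) '' ↑(insert i T)) =
        I + Ideal.span {X i} + Ideal.span ((fun i => (X i : MvPoly K (Fin n))) '' ↑T) := by
      rw [Finset.coe_insert, Set.image_insert_eq, Ideal.span_insert, add_assoc]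
      rfl
    rw [e, Finset.card_insert_of_notMem hi]
    refine le_trans ?_ h2
    push_cast
    rw [add_comm, ← tsub_tsub]
    exact tsub_le_tsub_right h1 _

end Depth3

/-! ### Graded modules and partial free resolutions -/

section Graded

/-- A `ℤ`-graded module over `K[x_1,…,x_n]`, given by its component operators: `c e` is the
projection onto the homogeneous component of degree `e`. -/
structure GrMod (K : Type) [Field K] (n : ℕ) where
  carrier : Type
  [grp : AddCommGroup carrier]
  [mod : Module (MvPoly K (Fin n)) carrier]
  c : ℤ → carrier →+ carrier
  c_idem : ∀ e m, c e (c e m) = c e m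
  c_orth : ∀ e e' m, e ≠ e' → c e (c e' m) = 0
  c_mono : ∀ e (a : Fin n →₀ ℕ) (k : K) m,
    c e ((monomial a k : MvPoly K (Fin n)) • m) =
      (monomial a k : MvPoly K (Fin n)) • c (e - Finsupp.weight (fun _ => (1 : ℤ)) a) m

attribute [instance] GrMod.grp GrMod.mod

instance (K : Type) [Field K] (n : ℕ) : CoeSort (GrMod K n) Type := ⟨GrMod.carrier⟩

variable {K : Type} [Field K] {n : ℕ}

local notation "R" => MvPoly K (Fin n)

/-- The component operators of the polynomial ring for the weights `w`. -/
noncomputable def hc (w : Fin n → ℤ) (e : ℤ) : R →ₗ[K] R := weightedHomogeneousComponent w e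

theorem coeff_hc (w : Fin n → ℤ) (e : ℤ) (p : R) (a : Fin n →₀ ℕ) [Decidable (Finsupp.weight w a = e)] :
    coeff a (hc w e p) = if Finsupp.weight w a = e then coeff a p else 0 := by
  rw [hc, coeff_weightedHomogeneousComponent]
  congr

theorem hc_idem (w : Fin n → ℤ) (e : ℤ) (p : R) : hc w e (hc w e p) = hc w e p := by
  classical
  ext a
  simp only [coeff_hc]
  split_ifs <;> rfl

theorem hc_orth (w : Fin n → ℤ) (e e' : ℤ) (p : R) (h : e ≠ e') : hc w e (hc w e' p) = 0 := by
  classical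
  ext a
  simp only [coeff_hc, coeff_zero]
  split_ifs with h1 h2
  · exact absurd (h1.symm.trans h2) h
  all_goals rfl

theorem hc_comm (w w' : Fin n → ℤ) (e e' : ℤ) (p : R) :
    hc w e (hc w' e' p) = hc w' e' (hc w e p) := by
  classical
  ext a
  simp only [coeff_hc]
  split_ifs <;> rfl

theorem hc_mono (w : Fin n → ℤ) (e : ℤ) (a : Fin n →₀ ℕ) (k : K) (p : R) :
    hc w e (monomial a k * p) = monomial a k * hc w (e - Finsupp.weight w a) p := by
  classical
  ext b
  rw [coeff_hc, coeff_monomial_mul', coeff_monomial_mul', coeff_hc]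
  by_cases h : a ≤ b
  · have : Finsupp.weight w b = Finsupp.weight w (b - a) + Finsupp.weight w a := by
      rw [← map_add, tsub_add_cancel_of_le h]
    simp only [if_pos h, this, eq_sub_iff_add_eq]
    split_ifs <;> simp
  · simp [h]

theorem hc_monomial (w : Fin n → ℤ) (e : ℤ) (a : Fin n →₀ ℕ) (k : K) [Decidable (Finsupp.weight w a = e)] :
    hc w e (monomial a k : R) = if Finsupp.weight w a = e then monomial a k else 0 := by
  classical
  ext b
  rw [coeff_hc, coeff_monomial]
  by_cases h : a = b
  · subst h
    rw [if_pos rfl]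
    split_ifs <;> simp
  · split_ifs <;> simp [coeff_monomial, h]

/-- The graded free module `⊕_j R(-d j)`. -/
noncomputable abbrev GrMod.free {ι : Type} (d : ι → ℤ) : GrMod K n where
  carrier := ι → R
  c e :=
    { toFun := fun v j => hc (fun _ => 1) (e - d j) (v j)
      map_zero' := by ext1 j; simp
      map_add' := fun u v => by ext1 j; simp }
  c_idem e v := by ext1 j; exact hc_idem _ _ _
  c_orth e e' v h := by ext1 j; exact hc_orth _ _ _ _ (by omega)
  c_mono e a k v := by
    ext1 j
    exact (hc_mono _ _ a k _).trans (by
      show _ = monomial a k * hc _ _ (v j)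
      rw [sub_right_comm])

/-- Graded (degree preserving) linear maps. -/
def IsGr {A B : GrMod K n} (f : A →ₗ[R] B) : Prop := ∀ e a, f (A.c e a) = B.c e (f a)

/-- A submodule of a graded module stable under the component operators. -/
noncomputable abbrev GrMod.sub (M : GrMod K n) (N : Submodule R M) (h : ∀ e, ∀ m ∈ N, M.c e m ∈ N) : GrMod K n where
  carrier := N
  c e :=
    { toFun := fun v => ⟨M.c e v, h e v v.2⟩
      map_zero' := by ext; simp
      map_add' := fun u v => by ext; simp }
  c_idem e v := Subtype.ext (M.c_idem e v)
  c_orth e e' v h := Subtype.ext (M.c_orth e e' v h)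
  c_mono e a k v := Subtype.ext (M.c_mono e a k v)

/-- The kernel of a graded map, with the induced grading. -/
noncomputable abbrev GrMod.ker {A B : GrMod K n} (f : A →ₗ[R] B) (hf : IsGr f) : GrMod K n :=
  A.sub (LinearMap.ker f) fun e m hm => by
    rw [LinearMap.mem_ker] at hm ⊢
    rw [hf, hm, map_zero]

/-- The direct sum of two graded modules. -/
noncomputable abbrev GrMod.prod (A B : GrMod K n) : GrMod K n where
  carrier := A × B
  c e := (A.c e).prodMap (B.c e)
  c_idem e _ := Prod.ext (A.c_idem e _) (B.c_idem e _)
  c_orth e e' _ h := Prod.ext (A.c_orth e e' _ h) (B.c_orth e e' _ h)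
  c_mono e a k _ := Prod.ext (A.c_mono e a k _) (B.c_mono e a k _)

/-- The twist `M(s)`, with `M(s)_e = M_{e+s}`. -/
noncomputable abbrev GrMod.shift (M : GrMod K n) (s : ℤ) : GrMod K n where
  carrier := M
  c e := M.c (e + s)
  c_idem e v := M.c_idem _ v
  c_orth e e' v h := M.c_orth _ _ v (by omega)
  c_mono e a k v := by
    rw [M.c_mono]
    congr 3
    omega

/-- `Reg k M r`: the graded module `M` has a partial free resolution
`F_{k-1} → ⋯ → F_0 → M → 0` with `F_i` generated in degrees at most `r + i`. -/
def Reg : ℕ → GrMod K n → ℤ → Prop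
  | 0, _, _ => True
  | k + 1, M, r => ∃ (ι : Type) (_ : Fintype ι) (d : ι → ℤ) (_ : ∀ j, d j ≤ r)
      (p : (GrMod.free d : GrMod K n) →ₗ[R] M) (hp : IsGr p) (_ : Function.Surjective p),
      Reg k (GrMod.ker p hp) (r + 1)

theorem Reg.mono {k : ℕ} : ∀ {M : GrMod K n} {r s : ℤ}, r ≤ s → Reg k M r → Reg k M s := by
  induction k with
  | zero => intros; trivial
  | succ k ih =>
    rintro M r s h ⟨ι, hι, d, hd, p, hp, hs, hk⟩
    exact ⟨ι, hι, d, fun j => (hd j).trans h, p, hp, hs, ih (by omega) hk⟩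

theorem Reg.pred {k : ℕ} : ∀ {M : GrMod K n} {r : ℤ}, Reg (k + 1) M r → Reg k M r := by
  induction k with
  | zero => intros; trivial
  | succ k ih =>
    rintro M r ⟨ι, hι, d, hd, p, hp, hs, hk⟩
    exact ⟨ι, hι, d, hd, p, hp, hs, ih hk⟩

theorem Reg.iso {k : ℕ} : ∀ {A B : GrMod K n} {r : ℤ} (f : A →ₗ[R] B), IsGr f →
    Function.Bijective f → Reg k A r → Reg k B r := by
  induction k with
  | zero => intros; trivial
  | succ k ih =>
    rintro A B r f hf hb ⟨ι, hι, d, hd, p, hp, hs, hk⟩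
    have hfp : IsGr (f.comp p) := fun e v => by
      rw [LinearMap.comp_apply, hp, hf]; rfl
    refine ⟨ι, hι, d, hd, f.comp p, hfp, hb.2.comp hs, ?_⟩
    have hmem : ∀ v : GrMod.ker p hp, (f.comp p) v.1 = 0 := fun v => by
      rw [LinearMap.comp_apply, LinearMap.mem_ker.1 v.2, map_zero]
    refine ih (A := GrMod.ker p hp) (B := GrMod.ker (f.comp p) hfp)
      (Submodule.inclusion (p := LinearMap.ker p) (p' := LinearMap.ker (f.comp p))
        (fun v hv => hmem ⟨v, hv⟩)) (fun e v => rfl) ⟨Submodule.inclusion_injective _, ?_⟩ hk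
    rintro ⟨v, hv⟩
    refine ⟨⟨v, ?_⟩, rfl⟩
    exact hb.1 ((LinearMap.mem_ker.1 hv).trans (map_zero f).symm)

theorem Reg.iso_symm {k : ℕ} {A B : GrMod K n} {r : ℤ} (f : A →ₗ[R] B) (hf : IsGr f)
    (hb : Function.Bijective f) (h : Reg k B r) : Reg k A r := by
  let g := LinearEquiv.ofBijective f hb
  refine Reg.iso (A := B) (B := A) g.symm.toLinearMap ?_ g.symm.bijective h
  intro e b
  obtain ⟨a, rfl⟩ := hb.2 b
  have h1 : ∀ a, g.symm (f a) = a := fun a => g.symm_apply_apply a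
  show g.symm (B.c e (f a)) = A.c e (g.symm (f a))
  rw [← hf, h1, h1]

theorem Reg.of_subsingleton {k : ℕ} : ∀ {M : GrMod K n} {r : ℤ}, Subsingleton M → Reg k M r := by
  induction k with
  | zero => intros; trivial
  | succ k ih =>
    intro M r hM
    refine ⟨Empty, inferInstance, Empty.elim, fun j => j.elim, 0, fun e a => hM.elim _ _,
      fun m => ⟨0, hM.elim _ _⟩, ih ?_⟩
    refine ⟨fun a b => Subtype.ext ?_⟩
    funext j
    exact j.elim

theorem Reg.free {k : ℕ} {ι : Type} [hι : Fintype ι] (d : ι → ℤ) {r : ℤ} (hd : ∀ j, d j ≤ r) :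
    Reg k (GrMod.free d : GrMod K n) r := by
  cases k with
  | zero => trivial
  | succ k =>
    refine ⟨ι, hι, d, hd, LinearMap.id, fun e a => rfl, Function.surjective_id,
      Reg.of_subsingleton ⟨fun a b => Subtype.ext ?_⟩⟩
    exact (LinearMap.mem_ker.1 a.2).trans (LinearMap.mem_ker.1 b.2).symm

/-- `c_e(p m)` for a homogeneous element `m` of degree `d`. -/
theorem GrMod.c_smul_of_homog (M : GrMod K n) (d e : ℤ) (m : M) (hm : M.c d m = m) (p : R) :
    M.c e (p • m) = hc (fun _ => 1) (e - d) p • m := by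
  classical
  induction p using MvPolynomial.induction_on' with
  | add p q hp hq => rw [add_smul, map_add, hp, hq, map_add, add_smul]
  | monomial a k =>
    rw [M.c_mono, hc_monomial]
    split_ifs with h
    · rw [h, sub_sub_cancel, hm]
    · rw [← hm, M.c_orth _ _ _ (by omega), smul_zero, zero_smul]

/-- The linear map out of a free module with prescribed values on the standard basis. -/
noncomputable def freeHom {ι : Type} [Fintype ι] (d : ι → ℤ) (M : GrMod K n) (m : ι → M) :
    (GrMod.free d : GrMod K n) →ₗ[R] M :=
  (Fintype.linearCombination R m : (ι → R) →ₗ[R] M)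

theorem freeHom_apply {ι : Type} [Fintype ι] (d : ι → ℤ) (M : GrMod K n) (m : ι → M) (v : ι → R) :
    freeHom d M m v = ∑ j, v j • m j := rfl

theorem isGr_freeHom {ι : Type} [Fintype ι] (d : ι → ℤ) (M : GrMod K n) (m : ι → M)
    (hm : ∀ j, M.c (d j) (m j) = m j) : IsGr (freeHom d M m) := by
  intro e v
  rw [freeHom_apply d M m v, map_sum]
  refine (freeHom_apply d M m _).trans (Finset.sum_congr rfl fun j _ => ?_)
  rw [M.c_smul_of_homog (d j) e (m j) (hm j)]
  rfl

theorem freeHom_single {ι : Type} [Fintype ι] [DecidableEq ι] (d : ι → ℤ) (M : GrMod K n) (m : ι → M) (j : ι) :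
    freeHom d M m (Pi.single j 1 : ι → R) = m j := by
  rw [freeHom_apply, Finset.sum_eq_single j]
  · simp
  · intro i _ hi; rw [Pi.single_eq_of_ne hi, zero_smul]
  · simp

theorem c_single {ι : Type} [DecidableEq ι] (d : ι → ℤ) (j : ι) :
    (GrMod.free d : GrMod K n).c (d j) (Pi.single j 1 : ι → R) = (Pi.single j 1 : ι → R) := by
  classical
  funext i
  show hc _ (d j - d i) ((Pi.single j 1 : ι → R) i) = _
  by_cases h : i = j
  · subst h
    rw [Pi.single_eq_same, sub_self]
    have : (1 : R) = monomial 0 1 := rfl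
    rw [this, hc_monomial, if_pos (by simp)]
  · rw [Pi.single_eq_of_ne h, map_zero]

theorem linearMap_eq_freeHom {ι : Type} [Fintype ι] [DecidableEq ι] (d : ι → ℤ) (M : GrMod K n)
    (f : (GrMod.free d : GrMod K n) →ₗ[R] M) :
    f = freeHom d M fun j => f (Pi.single j 1 : ι → R) := by
  refine LinearMap.pi_ext' (φ := fun _ : ι => R) (f := f) fun j => ?_
  refine LinearMap.ext_ring ?_
  show f (Pi.single j 1 : ι → R) = freeHom d M _ (Pi.single j 1 : ι → R)
  rw [freeHom_single]

theorem exists_lift {ι : Type} [Fintype ι] (d : ι → ℤ) {B C : GrMod K n} (q : B →ₗ[R] C)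
    (hq : IsGr q) (hs : Function.Surjective q) (f : (GrMod.free d : GrMod K n) →ₗ[R] C)
    (hf : IsGr f) : ∃ g : (GrMod.free d : GrMod K n) →ₗ[R] B, IsGr g ∧ ∀ v, q (g v) = f v := by
  classical
  choose b hb using fun j => hs (f (Pi.single j 1 : ι → R))
  refine ⟨freeHom d B fun j => B.c (d j) (b j), isGr_freeHom d B _ fun j => B.c_idem _ _, ?_⟩
  intro v
  conv_rhs => rw [linearMap_eq_freeHom d C f]
  rw [freeHom_apply d B _ v, map_sum, freeHom_apply d C _ v]
  refine Finset.sum_congr rfl fun j _ => ?_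
  rw [map_smul, hq, hb]
  refine congrArg (fun t => v j • t) ((hf _ _).symm.trans ?_)
  rw [c_single d j]

end Graded

/-! ### Short exact sequences -/

section Exact
variable {K : Type} [Field K] {n : ℕ}

local notation "R" => MvPoly K (Fin n)

/-- Short exact sequences `0 → A → B → C → 0` of graded modules. -/
structure IsSES {A B C : GrMod K n} (i : A →ₗ[R] B) (q : B →ₗ[R] C) : Prop where
  gr_i : IsGr i
  gr_q : IsGr q
  inj : Function.Injective i
  surj : Function.Surjective q
  exact : ∀ b, q b = 0 ↔ ∃ a, i a = b

theorem Reg.ker_of_ses {k : ℕ} {A B C : GrMod K n} {i : A →ₗ[R] B} {q : B →ₗ[R] C} (h : IsSES i q)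
    {r : ℤ} (hA : Reg k A r) : Reg k (GrMod.ker q h.gr_q) r := by
  refine Reg.iso (A := A) (B := GrMod.ker q h.gr_q)
    (LinearMap.codRestrict (LinearMap.ker q) i fun a => (h.exact _).2 ⟨a, rfl⟩) ?_ ⟨?_, ?_⟩ hA
  · intro e a
    exact Subtype.ext (h.gr_i e a)
  · intro a b hab
    exact h.inj (congrArg Subtype.val hab)
  · rintro ⟨b, hb⟩
    obtain ⟨a, rfl⟩ := (h.exact b).1 hb
    exact ⟨a, rfl⟩

/-- Horseshoe lemma. -/
theorem Reg.horseshoe {k : ℕ} : ∀ {A B C : GrMod K n} {i : A →ₗ[R] B} {q : B →ₗ[R] C},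
    IsSES i q → ∀ {r : ℤ}, Reg k A r → Reg k C r → Reg k B r := by
  induction k with
  | zero => intros; trivial
  | succ k ih =>
    rintro A B C i q h r ⟨ι, hι, d, hd, p, hp, hps, hk⟩ ⟨κ, hκ, d', hd', p', hp', hps', hk'⟩
    obtain ⟨t, ht, hqt⟩ := exists_lift d' q h.gr_q h.surj p' hp'
    let D := Sum.elim d d'
    let π : (GrMod.free D : GrMod K n) →ₗ[R] B :=
      (i.comp p).comp (LinearMap.funLeft R R Sum.inl) + t.comp (LinearMap.funLeft R R Sum.inr)
    have hπ : ∀ v : ι ⊕ κ → R, π v = i (p (fun j => v (Sum.inl j))) + t (fun j => v (Sum.inr j)) :=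
      fun v => rfl
    have gπ : IsGr π := by
      intro e v
      rw [hπ v, map_add, ← h.gr_i, ← hp, ← ht]
      rfl
    have hqi : ∀ a, q (i a) = 0 := fun a => (h.exact _).2 ⟨a, rfl⟩
    have hqπ : ∀ v : ι ⊕ κ → R, q (π v) = p' (fun j => v (Sum.inr j)) := fun v => by
      rw [hπ, map_add, hqi, zero_add, hqt]
    have sπ : Function.Surjective π := by
      intro b
      obtain ⟨y, hy⟩ := hps' (q b)
      obtain ⟨a, ha⟩ := (h.exact (b - t y)).1 (by rw [map_sub, hqt, hy, sub_self])
      obtain ⟨x, rfl⟩ := hps a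
      refine ⟨(Sum.elim x y : ι ⊕ κ → R), ?_⟩
      rw [hπ]
      simp only [Sum.elim_inl, Sum.elim_inr]
      exact (congrArg (· + t y) ha).trans (sub_add_cancel b (t y))
    refine ⟨ι ⊕ κ, inferInstance, D, ?_, π, gπ, sπ, ?_⟩
    · rintro (j | j)
      · exact hd j
      · exact hd' j
    let ex : (ι → R) →ₗ[R] (ι ⊕ κ → R) :=
      { toFun := fun x => Sum.elim x 0
        map_add' := fun x y => by ext1 (j | j) <;> simp
        map_smul' := fun c x => by ext1 (j | j) <;> simp }
    have hex : ∀ x : ι → R, π (ex x) = i (p x) := fun x => by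
      rw [hπ]
      exact (congrArg (i (p x) + ·) (map_zero t)).trans (add_zero _)
    let i' : GrMod.ker p hp →ₗ[R] GrMod.ker π gπ :=
      (ex.comp (LinearMap.ker p).subtype).codRestrict (LinearMap.ker π) fun x => by
        rw [LinearMap.mem_ker]
        refine (hex x.1).trans ?_
        rw [LinearMap.mem_ker.1 x.2, map_zero]
    let q' : GrMod.ker π gπ →ₗ[R] GrMod.ker p' hp' :=
      ((LinearMap.funLeft R R Sum.inr).comp (LinearMap.ker π).subtype).codRestrict
        (LinearMap.ker p') fun x => by
        rw [LinearMap.mem_ker]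
        refine (hqπ x.1).symm.trans ?_
        rw [LinearMap.mem_ker.1 x.2, map_zero]
    refine ih (i := i') (q := q') ⟨?_, ?_, ?_, ?_, ?_⟩ hk hk'
    · intro e x
      refine Subtype.ext ?_
      funext j
      rcases j with j | j
      · rfl
      · exact (map_zero (hc (K := K) (fun _ : Fin n => (1 : ℤ)) (e - d' j))).symm
    · intro e x
      rfl
    · intro x y hxy
      refine Subtype.ext ?_
      funext j
      exact congrFun (congrArg Subtype.val hxy) (Sum.inl j)
    · rintro ⟨y, hy⟩
      obtain ⟨a, ha⟩ := (h.exact (t y)).1 (by rw [hqt]; exact hy)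
      obtain ⟨x, rfl⟩ := hps a
      refine ⟨⟨(Sum.elim (-x) y : ι ⊕ κ → R), ?_⟩, rfl⟩
      rw [LinearMap.mem_ker, hπ]
      show i (p (-x)) + t y = 0
      rw [map_neg, map_neg, ha, neg_add_cancel]
    · rintro ⟨v, hv⟩
      constructor
      · intro hz
        have hz' : (fun j => v (Sum.inr j)) = (0 : κ → R) := congrArg Subtype.val hz
        have h1 : π v = i (p (fun j => v (Sum.inl j))) := by
          rw [hπ, hz']
          exact (congrArg (i (p _) + ·) (map_zero t)).trans (add_zero _)
        have h2 : p (fun j => v (Sum.inl j)) = 0 :=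
          h.inj ((h1.symm.trans hv).trans (map_zero i).symm)
        refine ⟨⟨fun j => v (Sum.inl j), h2⟩, Subtype.ext ?_⟩
        funext j
        rcases j with j | j
        · rfl
        · exact (congrFun hz' j).symm
      · rintro ⟨x, hx⟩
        refine Subtype.ext ?_
        funext j
        exact (congrFun (congrArg Subtype.val hx) (Sum.inr j)).symm

/-- The mapping cone bound for the last term of a short exact sequence. -/
theorem Reg.cone {k : ℕ} {A B C : GrMod K n} {i : A →ₗ[R] B} {q : B →ₗ[R] C} (h : IsSES i q) {s : ℤ}
    (hB : Reg (k + 1) B s) (hA : Reg k A (s + 1)) : Reg (k + 1) C s := by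
  obtain ⟨ι, hι, d, hd, p, hp, hps, hk⟩ := hB
  have hqp : IsGr (q.comp p) := fun e v => by
    rw [LinearMap.comp_apply, hp, h.gr_q]; rfl
  refine ⟨ι, hι, d, hd, q.comp p, hqp, h.surj.comp hps, ?_⟩
  have hA' := Reg.ker_of_ses h hA
  let i' : GrMod.ker p hp →ₗ[R] GrMod.ker (q.comp p) hqp :=
    Submodule.inclusion (p := LinearMap.ker p) (p' := LinearMap.ker (q.comp p)) fun v hv => by
      rw [LinearMap.mem_ker, LinearMap.comp_apply, LinearMap.mem_ker.1 hv, map_zero]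
  let q' : GrMod.ker (q.comp p) hqp →ₗ[R] GrMod.ker q h.gr_q :=
    (p.comp (LinearMap.ker (q.comp p)).subtype).codRestrict (LinearMap.ker q) fun v => v.2
  refine Reg.horseshoe (i := i') (q := q') ⟨?_, ?_, ?_, ?_, ?_⟩ hk hA'
  · intro e v; rfl
  · intro e v; exact Subtype.ext (hp e v.1)
  · exact Submodule.inclusion_injective _
  · rintro ⟨b, hb⟩
    obtain ⟨v, rfl⟩ := hps b
    exact ⟨⟨v, hb⟩, rfl⟩
  · rintro ⟨v, hv⟩
    constructor
    · intro hz
      exact ⟨⟨v, congrArg Subtype.val hz⟩, rfl⟩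
    · rintro ⟨x, hx⟩
      refine Subtype.ext ?_
      have : x.1 = v := congrArg Subtype.val hx
      show p v = 0
      rw [← this]
      exact x.2

/-- Schanuel-type independence: the bound on the first syzygy module does not depend on the choice
of the free cover. -/
theorem Reg.indep {k : ℕ} {M : GrMod K n} {ι : Type} [Fintype ι] {d : ι → ℤ} {r : ℤ}
    (hd : ∀ j, d j ≤ r) (p : (GrMod.free d : GrMod K n) →ₗ[R] M) (hp : IsGr p)
    (hs : Function.Surjective p) (hM : Reg (k + 1) M r) : Reg k (GrMod.ker p hp) (r + 1) := by
  cases k with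
  | zero => trivial
  | succ k =>
  obtain ⟨κ, hκ, d', hd', p', hp', hs', hk⟩ := hM
  obtain ⟨t, ht, hpt⟩ := exists_lift d' p hp hs p' hp'
  let Z := GrMod.ker p hp
  let Z' := GrMod.ker p' hp'
  let G : GrMod K n := GrMod.free d'
  let u : Z' →ₗ[R] Z :=
    (t.comp (LinearMap.ker p').subtype).codRestrict (LinearMap.ker p) fun z => by
      rw [LinearMap.mem_ker]
      exact (hpt z.1).trans z.2
  have hmid : Reg (k + 1) (GrMod.prod Z G) (r + 1) := by
    let i : Z' →ₗ[R] GrMod.prod Z G := LinearMap.prod (-u) (LinearMap.ker p').subtype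
    let q : GrMod.prod Z G →ₗ[R] (GrMod.free d : GrMod K n) :=
      LinearMap.coprod (LinearMap.ker p).subtype t
    have hq : ∀ z : Z, ∀ g : G, q (z, g) = z.1 + t g := fun z g => rfl
    refine Reg.horseshoe (i := i) (q := q) ⟨?_, ?_, ?_, ?_, ?_⟩ hk
      (Reg.free d fun j => (hd j).trans (by omega))
    · intro e z
      refine Prod.ext (Subtype.ext ?_) rfl
      show -(t ((GrMod.free d' : GrMod K n).c e z.1)) = (GrMod.free d : GrMod K n).c e (-(t z.1))
      rw [ht, map_neg]
    · rintro e ⟨z, g⟩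
      rw [hq z g, map_add, ← ht]
      rfl
    · intro x y hxy
      exact Subtype.ext (congrArg Prod.snd hxy)
    · intro f
      obtain ⟨g, hg⟩ := hs' (p f)
      refine ⟨(⟨f - t g, ?_⟩, g), ?_⟩
      · rw [LinearMap.mem_ker, map_sub, hpt, hg, sub_self]
      · rw [hq, sub_add_cancel]
    · rintro ⟨z, g⟩
      constructor
      · intro h0
        rw [hq] at h0
        have hz : z.1 = -(t g) := eq_neg_of_add_eq_zero_left h0
        have hg : p' g = 0 := by
          have := congrArg p h0
          rw [map_add, map_zero, hpt, LinearMap.mem_ker.1 z.2, zero_add] at this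
          exact this
        exact ⟨⟨g, hg⟩, Prod.ext (Subtype.ext hz.symm) rfl⟩
      · rintro ⟨x, hx⟩
        have h1 : -(t x.1) = z.1 := congrArg Subtype.val (congrArg Prod.fst hx)
        have h2 : x.1 = g := congrArg Prod.snd hx
        rw [hq, ← h1, h2, neg_add_cancel]
  let i : G →ₗ[R] GrMod.prod Z G := LinearMap.inr R Z G
  let q : GrMod.prod Z G →ₗ[R] Z := LinearMap.fst R Z G
  refine Reg.cone (i := i) (q := q) ⟨?_, ?_, ?_, ?_, ?_⟩ hmid
    (Reg.free d' fun j => (hd' j).trans (by omega))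
  · intro e g
    exact Prod.ext (map_zero (Z.c e)).symm rfl
  · intro e g; rfl
  · intro x y hxy; exact congrArg Prod.snd hxy
  · intro z; exact ⟨(z, 0), rfl⟩
  · rintro ⟨z, g⟩
    constructor
    · intro h0
      exact ⟨g, Prod.ext (show (0 : Z) = z from h0.symm) rfl⟩
    · rintro ⟨x, hx⟩
      exact (congrArg Prod.fst hx).symm

theorem Reg.shift {k : ℕ} (s : ℤ) : ∀ {M : GrMod K n} {r : ℤ}, Reg k M r →
    Reg k (M.shift s) (r - s) := by
  induction k with
  | zero => intros; trivial
  | succ k ih =>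
    rintro M r ⟨ι, hι, d, hd, p, hp, hps, hk⟩
    let p' : (GrMod.free (fun j => d j - s) : GrMod K n) →ₗ[R] M.shift s := p
    have hc' : ∀ e v, (GrMod.free (fun j => d j - s) : GrMod K n).c e v =
        (GrMod.free d : GrMod K n).c (e + s) v := by
      intro e v
      funext j
      show hc _ (e - (d j - s)) (v j) = hc _ (e + s - d j) (v j)
      rw [sub_sub_eq_add_sub]
    have hp' : IsGr p' := by
      intro e v
      rw [hc']
      exact hp (e + s) v
    refine ⟨ι, hι, fun j => d j - s, fun j => sub_le_sub_right (hd j) s, p', hp', hps, ?_⟩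
    have h1 := ih hk
    have h2 : r + 1 - s = r - s + 1 := by omega
    rw [h2] at h1
    refine Reg.iso (A := (GrMod.ker p hp).shift s) (B := GrMod.ker p' hp')
      (LinearMap.id (M := LinearMap.ker p)) ?_ Function.bijective_id h1
    intro e v
    exact Subtype.ext (hc' e v.1).symm

end Exact

/-! ### The part of positive degree in a variable -/

section Truncation
variable {K : Type} [Field K] {n : ℕ}

local notation "R" => MvPoly K (Fin n)

/-- The weights of the grading of `R` by the exponent of `x`. -/
def xw (x : Fin n) : Fin n → ℤ := Pi.single x 1

theorem weight_xw (x : Fin n) (a : Fin n →₀ ℕ) : Finsupp.weight (xw x) a = a x := by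
  classical
  rw [Finsupp.weight_apply, Finsupp.sum_fintype _ _ (by simp), Finset.sum_eq_single x]
  · simp [xw]
  · intro i _ hi
    simp [xw, Pi.single_eq_of_ne hi]
  · simp

/-- A second grading on a graded module `M`, in degrees `≥ 0` and compatible with the grading of
`R` by the exponent of the variable `x`. -/
structure XGr (M : GrMod K n) (x : Fin n) where
  b : ℤ → M →+ M
  b_idem : ∀ a m, b a (b a m) = b a m
  b_orth : ∀ a a' m, a ≠ a' → b a (b a' m) = 0
  b_mono : ∀ e (a : Fin n →₀ ℕ) (k : K) m,
    b e ((monomial a k : R) • m) = (monomial a k : R) • b (e - Finsupp.weight (xw x) a) m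
  b_comm : ∀ a e m, b a (M.c e m) = M.c e (b a m)
  b_fin : ∀ m, ∀ᶠ N : ℕ in Filter.atTop, ∑ a ∈ Finset.range N, b a m = m

variable {x : Fin n}

theorem XGr.b_neg {M : GrMod K n} (X : XGr M x) (a : ℤ) (ha : a < 0) (m : M) : X.b a m = 0 := by
  obtain ⟨N, hN⟩ := (X.b_fin m).exists
  rw [← hN, map_sum]
  exact Finset.sum_eq_zero fun i _ => X.b_orth _ _ _ (by omega)

/-- `b_e(p m)` for an element `m` of `x`-degree `d`. -/
theorem XGr.b_smul_of_homog {M : GrMod K n} (X : XGr M x) (d e : ℤ) (m : M) (hm : X.b d m = m)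
    (p : R) : X.b e (p • m) = hc (xw x) (e - d) p • m := by
  classical
  induction p using MvPolynomial.induction_on' with
  | add p q hp hq => rw [add_smul, map_add, hp, hq, map_add, add_smul]
  | monomial a k =>
    rw [X.b_mono, hc_monomial]
    split_ifs with h
    · rw [h, sub_sub_cancel, hm]
    · rw [← hm, X.b_orth _ _ _ (by omega), smul_zero, zero_smul]

/-- The submodule `M_{≥ 1}` of elements of positive degree in `x`. -/
noncomputable def XGr.posPart {M : GrMod K n} (X : XGr M x) : Submodule R M where
  carrier := {m | X.b 0 m = 0}
  zero_mem' := map_zero _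
  add_mem' := fun {u v} hu hv => by
    show X.b 0 (u + v) = 0
    rw [map_add, show X.b 0 u = 0 from hu, show X.b 0 v = 0 from hv, add_zero]
  smul_mem' := fun p m hm => by
    show X.b 0 (p • m) = 0
    induction p using MvPolynomial.induction_on' with
    | add p q hp hq => rw [add_smul, map_add, hp, hq, add_zero]
    | monomial a k =>
      rw [X.b_mono, weight_xw]
      by_cases h : a x = 0
      · rw [h, Nat.cast_zero, sub_zero, show X.b 0 m = 0 from hm, smul_zero]
      · rw [X.b_neg _ (by omega), smul_zero]

theorem XGr.mem_posPart {M : GrMod K n} (X : XGr M x) (m : M) : m ∈ X.posPart ↔ X.b 0 m = 0 :=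
  Iff.rfl

/-- The positive part `posPart`, with the grading induced from `M`. -/
noncomputable abbrev XGr.trunc {M : GrMod K n} (X : XGr M x) : GrMod K n :=
  M.sub X.posPart fun e m hm => by
    rw [X.mem_posPart] at hm ⊢
    rw [X.b_comm, hm, map_zero]

/-- The grading by `x`-degree on the kernel of a bigraded map. -/
noncomputable def XGr.ker {A B : GrMod K n} (X : XGr A x) (Y : XGr B x) (f : A →ₗ[R] B) (hf : IsGr f)
    (hf' : ∀ e a, f (X.b e a) = Y.b e (f a)) : XGr (GrMod.ker f hf) x where
  b e :=
    { toFun := fun v => ⟨X.b e v.1, by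
        rw [LinearMap.mem_ker, hf', LinearMap.mem_ker.1 v.2, map_zero]⟩
      map_zero' := Subtype.ext (map_zero (X.b e))
      map_add' := fun u v => Subtype.ext (map_add (X.b e) u.1 v.1) }
  b_idem a v := Subtype.ext (X.b_idem a v.1)
  b_orth a a' v h := Subtype.ext (X.b_orth a a' v.1 h)
  b_mono e a k v := Subtype.ext (X.b_mono e a k v.1)
  b_comm a e v := Subtype.ext (X.b_comm a e v.1)
  b_fin v := by
    filter_upwards [X.b_fin v.1] with N hN
    refine Subtype.ext (Eq.trans ?_ hN)
    exact map_sum (LinearMap.ker f).subtype _ _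

theorem hc_xw_fin (α : ℕ) (p : R) :
    ∀ᶠ N : ℕ in Filter.atTop, ∑ a ∈ Finset.range N, hc (xw x) ((a : ℤ) - α) p = p := by
  classical
  induction p using MvPolynomial.induction_on' with
  | add p q hp hq =>
    filter_upwards [hp, hq] with N h1 h2
    simp only [map_add, Finset.sum_add_distrib, h1, h2]
  | monomial a k =>
    filter_upwards [Filter.eventually_gt_atTop (a x + α)] with N hN
    simp only [hc_monomial, weight_xw]
    rw [Finset.sum_eq_single (a x + α)]
    · rw [if_pos (by push_cast; ring)]
    · intro i _ hi
      rw [if_neg (by omega)]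
    · intro h
      exact absurd (Finset.mem_range.2 hN) h

theorem hc_xw_neg (e : ℤ) (he : e < 0) (p : R) : hc (xw x) e p = 0 := by
  classical
  ext a
  rw [coeff_hc, weight_xw, if_neg (by omega), coeff_zero]

/-- The grading by `x`-degree on `⊕_j R(-d j)` for which the `j`-th basis vector has `x`-degree `α j`. -/
noncomputable def XGr.free {ι : Type} [Finite ι] (d : ι → ℤ) (α : ι → ℕ) :
    XGr (GrMod.free d : GrMod K n) x where
  b e :=
    { toFun := fun v j => hc (xw x) (e - α j) (v j)
      map_zero' := by ext1 j; exact map_zero (hc (xw x) (e - α j))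
      map_add' := fun u v => by ext1 j; exact map_add (hc (xw x) (e - α j)) (u j) (v j) }
  b_idem e v := by ext1 j; exact hc_idem _ _ _
  b_orth e e' v h := by ext1 j; exact hc_orth _ _ _ _ (by omega)
  b_mono e a k v := by
    ext1 j
    exact (hc_mono _ _ a k _).trans (by
      show _ = monomial a k * hc _ _ (v j)
      rw [sub_right_comm])
  b_comm a e v := by ext1 j; exact hc_comm _ _ _ _ _
  b_fin v := by
    have := Filter.eventually_all.2 fun j => hc_xw_fin (x := x) (α j) (v j)
    filter_upwards [this] with N hN
    funext j
    refine Eq.trans ?_ (hN j)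
    exact Finset.sum_apply j _ _

theorem XGr.free_b {ι : Type} [Finite ι] (d : ι → ℤ) (α : ι → ℕ) (e : ℤ) (v : ι → R) (j : ι) :
    ((XGr.free d α : XGr (GrMod.free d : GrMod K n) x).b e v : ι → R) j =
      hc (xw x) (e - α j) (v j) := rfl

theorem hc_X_mul (w : Fin n → ℤ) (e : ℤ) (p : R) :
    hc w e (X x * p) = X x * hc w (e - w x) p := by
  have := hc_mono w e (Finsupp.single x 1) 1 p
  rw [Finsupp.weight_single, one_smul] at this
  exact this

theorem X_dvd_of_hc (p : R) (h : hc (xw x) 0 p = 0) : ∃ q, p = X x * q := by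
  classical
  have : p ∈ Ideal.span (mono K '' {Finsupp.single x 1}) := by
    rw [mem_span_mono]
    intro a ha
    refine ⟨_, rfl, ?_⟩
    rw [Finsupp.single_le_iff]
    by_contra hlt
    have h2 := congrArg (coeff a) h
    rw [coeff_hc, weight_xw, if_pos (by omega), coeff_zero] at h2
    exact mem_support_iff.1 ha h2
  rw [Set.image_singleton] at this
  exact Ideal.mem_span_singleton.1 this

/-- Passing to the part of positive degree in `x` raises the bounds by at most one: the positive
part of a bigraded free module is free, a generator `e` of `x`-degree zero being replaced by
`x e`. -/
theorem Reg.trunc {k : ℕ} : ∀ {M : GrMod K n} (Y : XGr M x) {r : ℤ}, Reg k M r →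
    Reg k Y.trunc (r + 1) := by
  classical
  induction k with
  | zero => intros; trivial
  | succ k ih =>
    intro M Y r hM
    obtain ⟨ι, hι, d, hd, p, hp, hps, hk⟩ := hM
    have hM : Reg (k + 1) M r := ⟨ι, hι, d, hd, p, hp, hps, hk⟩
    let m : ι → M := fun j => p (Pi.single j 1 : ι → R)
    have hm : ∀ j, M.c (d j) (m j) = m j := fun j => by
      show M.c (d j) (p _) = p _
      rw [← hp, c_single]
    obtain ⟨N, hN⟩ := (Filter.eventually_all.2 fun j => Y.b_fin (m j)).exists
    let d' : ι × Fin N → ℤ := fun j => d j.1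
    let α : ι × Fin N → ℕ := fun j => j.2
    let F : GrMod K n := GrMod.free d'
    let Z : XGr F x := XGr.free d' α
    let π : F →ₗ[R] M := freeHom d' M fun j => Y.b (j.2 : ℕ) (m j.1)
    have gπ : IsGr π := isGr_freeHom d' M _ fun j => by rw [← Y.b_comm, hm]
    have bπ : ∀ e v, π (Z.b e v) = Y.b e (π v) := by
      intro e v
      show freeHom d' M _ _ = Y.b e (freeHom d' M _ v)
      rw [freeHom_apply d' M _ v, map_sum]
      refine (freeHom_apply d' M _ _).trans (Finset.sum_congr rfl fun j _ => ?_)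
      rw [Y.b_smul_of_homog (j.2 : ℕ) e _ (Y.b_idem _ _)]
      rfl
    have sπ : Function.Surjective π := by
      intro y
      obtain ⟨v, rfl⟩ := hps y
      refine ⟨(fun j => v j.1 : ι × Fin N → R), ?_⟩
      rw [linearMap_eq_freeHom d M p]
      show freeHom d' M _ _ = _
      rw [freeHom_apply, freeHom_apply d M _ v, Fintype.sum_prod_type]
      refine Finset.sum_congr rfl fun j _ => ?_
      show ∑ y : Fin N, v j • Y.b ((y : ℕ) : ℤ) (m j) = v j • m j
      rw [← Finset.smul_sum, Fin.sum_univ_eq_sum_range (fun a : ℕ => Y.b a (m j)) N, hN j]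
    have hd' : ∀ j, d' j ≤ r := fun j => hd j.1
    have hker : Reg k (GrMod.ker π gπ) (r + 1) :=
      Reg.indep (ι := ι × Fin N) (d := d') (r := r) (k := k) (M := M) hd' π gπ sπ hM
    let Z' := Z.ker Y π gπ bπ
    have hZ' : Reg k Z'.trunc (r + 1 + 1) := ih Z' hker
    let d'' : ι × Fin N → ℤ := fun j => if α j = 0 then d j.1 + 1 else d j.1
    let g : ι × Fin N → R := fun j => if α j = 0 then X x else 1
    let F' : GrMod K n := GrMod.free d''
    let θ : F' →ₗ[R] F := LinearMap.pi fun j => (LinearMap.mulLeft R (g j)).comp (LinearMap.proj j)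
    have hθ : ∀ v j, (θ v : ι × Fin N → R) j = g j * v j := fun v j => rfl
    have hg0 : ∀ j, g j ≠ 0 := fun j => by
      by_cases h : α j = 0
      · simp only [g, if_pos h]; exact X_ne_zero x
      · simp only [g, if_neg h]; exact one_ne_zero
    have gθ : IsGr θ := by
      intro e v
      funext j
      show g j * hc _ (e - d'' j) (v j) = hc _ (e - d' j) (g j * v j)
      by_cases h : α j = 0
      · simp only [g, d'', d', if_pos h, hc_X_mul, sub_sub]
      · simp only [g, d'', d', if_neg h, one_mul]
    have bθ : ∀ v, Z.b 0 (θ v) = 0 := by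
      intro v
      funext j
      show hc _ (0 - (α j : ℤ)) (g j * v j) = 0
      by_cases h : α j = 0
      · simp only [g, if_pos h, hc_X_mul]
        rw [hc_xw_neg, mul_zero]
        have : xw x x = 1 := Pi.single_eq_same x 1
        omega
      · rw [hc_xw_neg]
        omega
    have iθ : Function.Injective θ := by
      intro u v huv
      funext j
      exact mul_left_cancel₀ (hg0 j) (congrFun huv j)
    have rθ : ∀ v : F, Z.b 0 v = 0 → ∃ u, θ u = v := by
      intro v hv
      have : ∀ j, ∃ q, v j = g j * q := by
        intro j
        by_cases h : α j = 0
        · simp only [g, if_pos h]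
          have h2 : hc (xw x) (0 - (α j : ℤ)) (v j) = 0 := congrFun hv j
          rw [h, Nat.cast_zero, sub_zero] at h2
          exact X_dvd_of_hc _ h2
        · exact ⟨v j, by simp only [g, if_neg h, one_mul]⟩
      choose q hq using this
      exact ⟨q, funext fun j => (hq j).symm⟩
    let P : F' →ₗ[R] Y.trunc := (π.comp θ).codRestrict Y.posPart fun v => by
      rw [Y.mem_posPart, LinearMap.comp_apply, ← bπ, bθ, map_zero]
    have gP : IsGr P := fun e v => Subtype.ext (by
      show π (θ _) = M.c e (π (θ v))
      rw [gθ, gπ])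
    refine ⟨ι × Fin N, inferInstance, d'', ?_, P, gP, ?_, ?_⟩
    · intro j
      have := hd j.1
      simp only [d'']
      split_ifs <;> omega
    · rintro ⟨y, hy⟩
      obtain ⟨v, rfl⟩ := sπ y
      rw [Y.mem_posPart, ← bπ] at hy
      obtain ⟨u, hu⟩ := rθ (v - Z.b 0 v) (by rw [map_sub, Z.b_idem, sub_self])
      refine ⟨u, Subtype.ext ?_⟩
      show π (θ u) = π v
      rw [hu, map_sub, hy, sub_zero]
    · refine Reg.iso_symm (A := GrMod.ker P gP) (B := Z'.trunc)
        (LinearMap.codRestrict Z'.posPart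
          ((θ.comp (LinearMap.ker P).subtype).codRestrict (LinearMap.ker π) fun v =>
            congrArg Subtype.val (LinearMap.mem_ker.1 v.2))
          (fun v => Subtype.ext (bθ v.1))) ?_ ⟨?_, ?_⟩ hZ'
      · intro e v
        exact Subtype.ext (Subtype.ext (gθ e v.1))
      · intro u v huv
        exact Subtype.ext (iθ (congrArg Subtype.val (congrArg Subtype.val huv)))
      · rintro ⟨⟨v, hv⟩, hv'⟩
        obtain ⟨u, rfl⟩ := rθ v (congrArg Subtype.val hv')
        exact ⟨⟨u, Subtype.ext hv⟩, rfl⟩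

end Truncation

/-! ### Quotients by monomial ideals -/

section Quotients
variable {K : Type} [Field K] {n : ℕ}

local notation "R" => MvPoly K (Fin n)

/-- Ideals homogeneous for every grading of `R` by weights of the variables. -/
def IsStable (I : Ideal R) : Prop := ∀ (w : Fin n → ℤ) (e : ℤ), ∀ p ∈ I, hc w e p ∈ I

theorem isStable_span (S : Set (Fin n →₀ ℕ)) : IsStable (Ideal.span (mono K '' S)) := by
  classical
  intro w e p hp
  rw [mem_span_mono] at hp ⊢
  intro a ha
  refine hp a (mem_support_iff.2 fun h => mem_support_iff.1 ha ?_)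
  rw [coeff_hc, h, ite_self]

theorem IsStable.colon {I : Ideal R} (h : IsStable I) (b : Fin n →₀ ℕ) :
    IsStable (I.colon (Ideal.span {mono K b})) := by
  intro w e p hp
  rw [mem_colon_span] at hp ⊢
  have := h w (e + Finsupp.weight w b) _ hp
  rw [mul_comm, mono, hc_mono, add_sub_cancel_right] at this
  rwa [mul_comm]

/-- The operator induced on `R/I` by a component operator of `R`. -/
noncomputable def qc (I : Ideal R) (h : IsStable I) (w : Fin n → ℤ) (e : ℤ) : (R ⧸ I) →+ (R ⧸ I) :=
  QuotientAddGroup.map I.toAddSubgroup I.toAddSubgroup (hc w e).toAddMonoidHom (h w e)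

theorem qc_mk (I : Ideal R) (h : IsStable I) (w : Fin n → ℤ) (e : ℤ) (p : R) :
    qc I h w e (Ideal.Quotient.mk I p) = Ideal.Quotient.mk I (hc w e p) := rfl

theorem smul_mk (I : Ideal R) (a p : R) :
    a • Ideal.Quotient.mk I p = Ideal.Quotient.mk I (a * p) := rfl

/-- The graded module `R/I`. -/
noncomputable abbrev GrMod.quot (I : Ideal R) (h : IsStable I) : GrMod K n where
  carrier := R ⧸ I
  c e := qc I h (fun _ => 1) e
  c_idem e m := by
    obtain ⟨p, rfl⟩ := Ideal.Quotient.mk_surjective m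
    simp only [qc_mk, hc_idem]
  c_orth e e' m he := by
    obtain ⟨p, rfl⟩ := Ideal.Quotient.mk_surjective m
    simp only [qc_mk, hc_orth _ _ _ _ he, map_zero]
  c_mono e a k m := by
    obtain ⟨p, rfl⟩ := Ideal.Quotient.mk_surjective m
    simp only [smul_mk, qc_mk, hc_mono]

/-- The grading of `R/I` by `x`-degree. -/
noncomputable def XGr.quot (I : Ideal R) (h : IsStable I) (x : Fin n) : XGr (GrMod.quot I h) x where
  b e := qc I h (xw x) e
  b_idem e m := by
    obtain ⟨p, rfl⟩ := Ideal.Quotient.mk_surjective m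
    simp only [qc_mk, hc_idem]
  b_orth e e' m he := by
    obtain ⟨p, rfl⟩ := Ideal.Quotient.mk_surjective m
    simp only [qc_mk, hc_orth _ _ _ _ he, map_zero]
  b_mono e a k m := by
    obtain ⟨p, rfl⟩ := Ideal.Quotient.mk_surjective m
    simp only [smul_mk, qc_mk, hc_mono]
  b_comm a e m := by
    obtain ⟨p, rfl⟩ := Ideal.Quotient.mk_surjective m
    simp only [qc_mk]
    rw [hc_comm]
  b_fin m := by
    obtain ⟨p, rfl⟩ := Ideal.Quotient.mk_surjective m
    filter_upwards [hc_xw_fin (x := x) 0 p] with N hN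
    simp only [qc_mk, ← map_sum]
    simp only [Nat.cast_zero, sub_zero] at hN
    rw [hN]

/-- Multiplication by `g` as a map `R/J → R/I`, when `gJ ⊆ I`. -/
noncomputable def mulQ (J I : Ideal R) (g : R) (h : ∀ p ∈ J, g * p ∈ I) : (R ⧸ J) →ₗ[R] (R ⧸ I) :=
  Submodule.mapQ J I (LinearMap.mulLeft R g) h

theorem mulQ_mk (J I : Ideal R) (g : R) (h : ∀ p ∈ J, g * p ∈ I) (p : R) :
    mulQ J I g h (Ideal.Quotient.mk J p) = Ideal.Quotient.mk I (g * p) := rfl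

theorem mulQ_eq_zero (I : Ideal R) (g : R) (h) (y : R ⧸ I.colon (Ideal.span {g}))
    (hy : mulQ (I.colon (Ideal.span {g})) I g h y = 0) : y = 0 := by
  obtain ⟨p, rfl⟩ := Ideal.Quotient.mk_surjective y
  rw [mulQ_mk, Ideal.Quotient.eq_zero_iff_mem] at hy
  rw [Ideal.Quotient.eq_zero_iff_mem, mem_colon_span, mul_comm]
  exact hy

theorem mul_mem_of_mem_colon (I : Ideal R) (g p : R) (hp : p ∈ I.colon (Ideal.span {g})) :
    g * p ∈ I := by
  rw [mem_colon_span, mul_comm] at hp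
  exact hp

theorem mulQ_qc (J I : Ideal R) (hJ : IsStable J) (hI : IsStable I) (b : Fin n →₀ ℕ) (h)
    (w : Fin n → ℤ) (e : ℤ) (y : R ⧸ J) :
    mulQ J I (mono K b) h (qc J hJ w (e - Finsupp.weight w b) y) =
      qc I hI w e (mulQ J I (mono K b) h y) := by
  obtain ⟨p, rfl⟩ := Ideal.Quotient.mk_surjective y
  rw [mulQ_mk, qc_mk, qc_mk, mulQ_mk, mono, hc_mono]

theorem mono_single (x : Fin n) : mono K (Finsupp.single x 1) = (X x : R) := rfl

/-- The colon by a variable does not increase the bounds: `R/(I : x)(-1)` is isomorphic to the part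
of positive `x`-degree of `R/I`. -/
theorem reg_colon_X {k : ℕ} {I : Ideal R} (hI : IsStable I) (x : Fin n) {r : ℤ}
    (h : Reg k (GrMod.quot I hI) r) :
    Reg k (GrMod.quot (I.colon (Ideal.span {mono K (Finsupp.single x 1)})) (hI.colon _)) r := by
  set m := mono K (Finsupp.single x 1) with hm
  set J := I.colon (Ideal.span {m}) with hJ
  have h1 := Reg.shift 1 (Reg.trunc (XGr.quot I hI x) h)
  rw [add_sub_cancel_right] at h1
  let φ : (R ⧸ J) →ₗ[R] (R ⧸ I) := mulQ J I m (mul_mem_of_mem_colon I m)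
  have hφ : ∀ y, φ y ∈ (XGr.quot I hI x).posPart := by
    intro y
    rw [XGr.mem_posPart]
    show qc I hI (xw x) 0 (φ y) = 0
    obtain ⟨p, rfl⟩ := Ideal.Quotient.mk_surjective y
    rw [mulQ_mk, qc_mk, hm, mono, hc_mono, hc_xw_neg, mul_zero, map_zero]
    rw [weight_xw, Finsupp.single_eq_same]; norm_num
  refine Reg.iso_symm (B := (XGr.quot I hI x).trunc.shift 1)
    (LinearMap.codRestrict (XGr.quot I hI x).posPart φ hφ) ?_ ⟨?_, ?_⟩ h1
  · intro e y
    refine Subtype.ext ?_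
    have := mulQ_qc J I (hI.colon _) hI (Finsupp.single x 1) (mul_mem_of_mem_colon I m)
      (fun _ => 1) (e + 1) y
    rw [Finsupp.weight_single, one_smul, add_sub_cancel_right] at this
    exact this
  · intro u v huv
    have h2 : φ (u - v) = 0 := by
      rw [map_sub, sub_eq_zero]; exact congrArg Subtype.val huv
    exact sub_eq_zero.1 (mulQ_eq_zero I m _ _ h2)
  · rintro ⟨y, hy⟩
    rw [XGr.mem_posPart] at hy
    obtain ⟨p, rfl⟩ := Ideal.Quotient.mk_surjective y
    have hy' : Ideal.Quotient.mk I (hc (xw x) 0 p) = 0 := hy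
    obtain ⟨q, hq⟩ := X_dvd_of_hc (x := x) (p - hc (xw x) 0 p) (by rw [map_sub, hc_idem, sub_self])
    refine ⟨Ideal.Quotient.mk J q, Subtype.ext ?_⟩
    show Ideal.Quotient.mk I (X x * q) = _
    rw [← hq, map_sub, hy', sub_zero]

theorem colon_colon (I : Ideal R) (f g : R) :
    (I.colon (Ideal.span {f})).colon (Ideal.span {g}) = I.colon (Ideal.span {f * g}) := by
  ext p
  simp only [mem_colon_span]
  rw [mul_assoc, mul_comm g f]

theorem Reg.congr_quot {k : ℕ} {I J : Ideal R} (hI : IsStable I) (hJ : IsStable J) (e : I = J) {r : ℤ}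
    (h : Reg k (GrMod.quot I hI) r) : Reg k (GrMod.quot J hJ) r := by
  subst e; exact h

theorem mono_add (a b : Fin n →₀ ℕ) : mono K (a + b) = mono K a * mono K b := by
  simp [mono, monomial_mul]

/-- Iterating `reg_colon_X` over the variables of a monomial. -/
theorem reg_colon {k : ℕ} (b : Fin n →₀ ℕ) : ∀ {I : Ideal R} (hI : IsStable I) {r : ℤ},
    Reg k (GrMod.quot I hI) r →
    Reg k (GrMod.quot (I.colon (Ideal.span {mono K b})) (hI.colon _)) r := by
  classical
  have key : ∀ m : ℕ, ∀ (b : Fin n →₀ ℕ), b.degree = m → ∀ {I : Ideal R} (hI : IsStable I) {r : ℤ},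
      Reg k (GrMod.quot I hI) r →
      Reg k (GrMod.quot (I.colon (Ideal.span {mono K b})) (hI.colon _)) r := by
    intro m
    induction m with
    | zero =>
      intro b hb I hI r h
      have : b = 0 := (Finsupp.degree_eq_zero_iff b).1 hb
      subst this
      refine h.congr_quot _ _ ?_
      ext p
      rw [mem_colon_span, show mono K (0 : Fin n →₀ ℕ) = 1 from rfl, mul_one]
    | succ m ih =>
      intro b hb I hI r h
      have : b ≠ 0 := by rintro rfl; simp at hb
      obtain ⟨x, hx⟩ := Finsupp.ne_iff.1 this
      have hle : Finsupp.single x 1 ≤ b := by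
        rw [Finsupp.single_le_iff]
        have : b x ≠ 0 := hx
        omega
      obtain ⟨c, rfl⟩ := exists_add_of_le hle
      have hc : c.degree = m := by
        rw [map_add, Finsupp.degree_single] at hb
        omega
      refine (ih c hc (hI.colon (Finsupp.single x 1)) (reg_colon_X hI x h)).congr_quot _ _ ?_
      rw [colon_colon, mono_add]
  intro I hI r h
  exact key _ b rfl hI h

/-- The exact sequence `0 → R/(I : f)(-deg f) → R/I → R/(I + (f)) → 0`. -/
theorem reg_add {k : ℕ} {I : Ideal R} (hI : IsStable I) (b : Fin n →₀ ℕ)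
    (h' : IsStable (I + Ideal.span {mono K b})) {s t : ℤ}
    (h : Reg (k + 1) (GrMod.quot I hI) s)
    (hc : Reg k (GrMod.quot (I.colon (Ideal.span {mono K b})) (hI.colon b)) t)
    (ht : t + b.degree ≤ s + 1) :
    Reg (k + 1) (GrMod.quot (I + Ideal.span {mono K b}) h') s := by
  set J := I.colon (Ideal.span {mono K b}) with hJ
  have hw : Finsupp.weight (fun _ : Fin n => (1 : ℤ)) b = b.degree := by
    rw [Finsupp.weight_apply, Finsupp.degree_apply, Finsupp.sum]
    simp
  have hle : I ≤ I + Ideal.span {mono K b} := le_sup_left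
  let i : ((GrMod.quot J (hI.colon b)).shift (-(b.degree : ℤ))) →ₗ[R] GrMod.quot I hI :=
    mulQ J I (mono K b) (mul_mem_of_mem_colon I _)
  let q : GrMod.quot I hI →ₗ[R] GrMod.quot (I + Ideal.span {mono K b}) h' :=
    Submodule.mapQ I (I + Ideal.span {mono K b}) LinearMap.id hle
  have hq : ∀ p, q (Ideal.Quotient.mk I p) = Ideal.Quotient.mk _ p := fun p => rfl
  have hses : IsSES i q := by
    refine ⟨?_, ?_, ?_, ?_, ?_⟩
    · intro e y
      have := mulQ_qc J I (hI.colon _) hI b (mul_mem_of_mem_colon I _) (fun _ => 1) e y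
      rw [hw] at this
      exact this
    · intro e y
      obtain ⟨p, rfl⟩ := Ideal.Quotient.mk_surjective y
      rfl
    · intro u v huv
      have h2 : i (u - v) = 0 := by rw [map_sub, sub_eq_zero]; exact huv
      exact sub_eq_zero.1 (mulQ_eq_zero I _ _ _ h2)
    · intro y
      obtain ⟨p, rfl⟩ := Ideal.Quotient.mk_surjective y
      exact ⟨Ideal.Quotient.mk I p, rfl⟩
    · intro y
      obtain ⟨p, rfl⟩ := Ideal.Quotient.mk_surjective y
      rw [hq]
      constructor
      · intro hp
        have hp : p ∈ I + Ideal.span {mono K b} := Ideal.Quotient.eq_zero_iff_mem.1 hp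
        obtain ⟨u, hu, v, hv, rfl⟩ := Submodule.mem_sup.1 hp
        obtain ⟨a, rfl⟩ := Ideal.mem_span_singleton.1 hv
        refine ⟨Ideal.Quotient.mk J a, ?_⟩
        show Ideal.Quotient.mk I (mono K b * a) = _
        rw [map_add, Ideal.Quotient.eq_zero_iff_mem.2 hu, zero_add]
      · rintro ⟨z, hz⟩
        obtain ⟨a, rfl⟩ := Ideal.Quotient.mk_surjective z
        have hz : Ideal.Quotient.mk I (mono K b * a) = Ideal.Quotient.mk I p := hz
        refine Ideal.Quotient.eq_zero_iff_mem.2 ?_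
        have h3 : p - mono K b * a ∈ I := Ideal.Quotient.eq.1 hz.symm
        rw [← sub_add_cancel p (mono K b * a)]
        exact Submodule.add_mem _ (hle h3) (Ideal.mul_mem_right _ _
          ((le_sup_right : _ ≤ I + Ideal.span {mono K b}) (Ideal.mem_span_singleton_self _)))
  refine Reg.cone hses h (Reg.mono ?_ (Reg.shift (-(b.degree : ℤ)) hc))
  omega

end Quotients

/-! ### Graded free resolutions -/

section Resolutions
variable {K : Type} [Field K] {n : ℕ}

local notation "R" => MvPoly K (Fin n)

theorem weight_one (a : Fin n →₀ ℕ) : Finsupp.weight (fun _ : Fin n => (1 : ℤ)) a = a.degree := by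
  rw [Finsupp.weight_apply, Finsupp.degree_apply, Finsupp.sum]
  simp

theorem homogComp_iff (e : ℤ) (p : R) : HomogComp K (Fin n) e p ↔ hc (fun _ => 1) e p = p := by
  classical
  have h1 : hc (fun _ => 1) e p = p ↔ ∀ a, coeff a p ≠ 0 → (a.degree : ℤ) = e := by
    rw [MvPolynomial.ext_iff]
    refine forall_congr' fun a => ?_
    rw [coeff_hc, weight_one]
    split_ifs with h
    · simp [h]
    · simp only [h, imp_false, not_not]
      exact eq_comm
  rw [h1, HomogComp]
  split_ifs with h
  · rw [mem_homogeneousSubmodule]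
    refine forall_congr' fun a => imp_congr_right fun _ => ?_
    have : Finsupp.weight (1 : Fin n → ℕ) a = a.degree := by
      rw [Finsupp.weight_apply, Finsupp.degree_apply, Finsupp.sum]
      simp
    rw [this]
    omega
  · constructor
    · rintro rfl a ha
      exact absurd (coeff_zero a) ha
    · intro h2
      ext a
      rw [coeff_zero]
      by_contra h3
      have := h2 a h3
      omega

theorem mem_quotComp_iff (I : Ideal R) (h : IsStable I) (e : ℤ) (y : R ⧸ I) :
    y ∈ QuotComp K (Fin n) I e ↔ qc I h (fun _ => 1) e y = y := by
  have h1 : y ∈ QuotComp K (Fin n) I e ↔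
      ∃ p, HomogComp K (Fin n) e p ∧ Ideal.Quotient.mk I p = y := by
    unfold QuotComp HomogComp
    split_ifs with he
    · rfl
    · rw [Submodule.mem_bot]
      constructor
      · rintro rfl
        exact ⟨0, rfl, map_zero _⟩
      · rintro ⟨p, rfl, rfl⟩
        exact map_zero _
  rw [h1]
  constructor
  · rintro ⟨p, hp, rfl⟩
    rw [qc_mk, (homogComp_iff e p).1 hp]
  · intro hy
    obtain ⟨p, rfl⟩ := Ideal.Quotient.mk_surjective y
    exact ⟨hc (fun _ => 1) e p, (homogComp_iff e _).2 (hc_idem _ _ _), hy⟩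

theorem isHomogVec_iff {m : ℕ} (d : Fin m → ℤ) (e : ℤ) (v : Fin m → R) :
    IsHomogVec K (Fin n) d e v ↔ (GrMod.free d : GrMod K n).c e v = v := by
  rw [IsHomogVec]
  simp only [homogComp_iff]
  exact funext_iff.symm

/-- A linear map out of a free module preserving homogeneous elements commutes with the component
operators. -/
theorem isGr_of_homog {ι : Type} [Fintype ι] (d : ι → ℤ) (M : GrMod K n)
    (f : (GrMod.free d : GrMod K n) →ₗ[R] M)
    (h : ∀ e v, (GrMod.free d : GrMod K n).c e v = v → M.c e (f v) = f v) : IsGr f := by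
  classical
  rw [linearMap_eq_freeHom d M f]
  exact isGr_freeHom d M _ fun j => h _ _ (c_single d j)

/-- One step of a partial resolution read off from an exact sequence `F → A → B` with `F` free. -/
theorem Reg.of_exact {k : ℕ} {ι : Type} [hι : Fintype ι] (d : ι → ℤ) {A B : GrMod K n} {r : ℤ}
    (hd : ∀ j, d j ≤ r) (f : (GrMod.free d : GrMod K n) →ₗ[R] A) (hf : IsGr f) (g : A →ₗ[R] B)
    (hg : IsGr g) (hfg : Function.Exact f g) (h : Reg k (GrMod.ker f hf) (r + 1)) :
    Reg (k + 1) (GrMod.ker g hg) r := by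
  let p : (GrMod.free d : GrMod K n) →ₗ[R] GrMod.ker g hg :=
    LinearMap.codRestrict (LinearMap.ker g) f fun v => (hfg _).2 ⟨v, rfl⟩
  have hp : IsGr p := fun e v => Subtype.ext (hf e v)
  refine ⟨ι, hι, d, hd, p, hp, ?_, ?_⟩
  · rintro ⟨y, hy⟩
    obtain ⟨v, hv⟩ := (hfg y).1 hy
    exact ⟨v, Subtype.ext hv⟩
  · have hmem : ∀ v, f v = 0 → p v = 0 := fun v hv => Subtype.ext hv
    refine Reg.iso (A := GrMod.ker f hf) (B := GrMod.ker p hp)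
      (Submodule.inclusion (p := LinearMap.ker f) (p' := LinearMap.ker p)
        (fun v hv => hmem v hv)) (fun e v => rfl) ⟨Submodule.inclusion_injective _, ?_⟩ h
    rintro ⟨v, hv⟩
    exact ⟨⟨v, congrArg Subtype.val (LinearMap.mem_ker.1 hv)⟩, rfl⟩

theorem reg_of_resBound {I : Ideal R} (hI : IsStable I) {r : ℤ} (h : ResBound K (Fin n) I r) (k : ℕ) :
    Reg k (GrMod.quot I hI) r := by
  obtain ⟨F, hF⟩ := h
  let f : ∀ i, (GrMod.free (F.dg (i + 1)) : GrMod K n) →ₗ[R] (GrMod.free (F.dg i) : GrMod K n) :=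
    F.dmap
  have hf : ∀ i, IsGr (f i) := fun i => isGr_of_homog _ _ _ fun e v hv =>
    (isHomogVec_iff _ _ _).1 (F.graded i e v ((isHomogVec_iff _ _ _).2 hv))
  let p : (GrMod.free (F.dg 0) : GrMod K n) →ₗ[R] GrMod.quot I hI := F.aug
  have hp : IsGr p := isGr_of_homog _ _ _ fun e v hv =>
    (mem_quotComp_iff I hI _ _).1 (F.aug_graded e v ((isHomogVec_iff _ _ _).2 hv))
  have hker : ∀ k i, Reg k (GrMod.ker (f i) (hf i)) (r + i + 2) := by
    intro k
    induction k with
    | zero => intros; trivial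
    | succ k ih =>
      intro i
      refine Reg.of_exact (F.dg (i + 1 + 1)) (fun j => ?_) (f (i + 1)) (hf (i + 1)) (f i) (hf i)
        (F.exactS i) (Reg.mono ?_ (ih (i + 1)))
      · have := hF _ j
        push_cast at this
        omega
      · push_cast; omega
  have hd0 : ∀ j, F.dg 0 j ≤ r := fun j => by simpa using hF 0 j
  cases k with
  | zero => trivial
  | succ k =>
  refine ⟨_, inferInstance, F.dg 0, hd0, p, hp, F.aug_surj, ?_⟩
  cases k with
  | zero => trivial
  | succ k =>
    refine Reg.of_exact (F.dg (0 + 1)) (fun j => ?_) (f 0) (hf 0) p hp F.exact0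
      (Reg.mono ?_ (hker k 0))
    · have h1 := sub_le_iff_le_add.1 (hF _ j)
      exact h1.trans (by push_cast; omega)
    · push_cast; omega

/-- A first step of a resolution, indexed by `Fin m`, whose kernel again has all bounds; iterating it
produces a full resolution. -/
theorem exists_cover {M : GrMod K n} {r : ℤ} (h : ∀ k, Reg k M r) :
    ∃ (m : ℕ) (d : Fin m → ℤ) (p : (GrMod.free d : GrMod K n) →ₗ[R] M) (hp : IsGr p),
      (∀ j, d j ≤ r) ∧ Function.Surjective p ∧ ∀ k, Reg k (GrMod.ker p hp) (r + 1) := by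
  obtain ⟨ι, hι, d, hd, p, hp, hs, -⟩ := h 1
  let ε := Fintype.equivFin ι
  let d' : Fin (Fintype.card ι) → ℤ := fun j => d (ε.symm j)
  let t : (GrMod.free d' : GrMod K n) →ₗ[R] (GrMod.free d : GrMod K n) := LinearMap.funLeft R R ε
  have ht : IsGr t := by
    intro e v
    funext j
    show hc _ (e - d (ε.symm (ε j))) (v (ε j)) = hc _ (e - d j) (v (ε j))
    rw [ε.symm_apply_apply]
  have hts : Function.Surjective t := LinearMap.funLeft_surjective_of_injective R R ε ε.injective
  have hpt : IsGr (p.comp t) := fun e v => by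
    rw [LinearMap.comp_apply, ht, hp]; rfl
  have hd' : ∀ j, d' j ≤ r := fun j => hd _
  exact ⟨_, d', p.comp t, hpt, hd', hs.comp hts, fun k =>
    Reg.indep (d := d') (M := M) hd' (p.comp t) hpt (hs.comp hts) (h (k + 1))⟩

/-- The resolution is built by recursion on pairs (syzygy module, bound). -/
theorem resBound_of_reg {I : Ideal R} (hI : IsStable I) {r : ℤ} (h : ∀ k, Reg k (GrMod.quot I hI) r) :
    ResBound K (Fin n) I r := by
  let St := {x : GrMod K n × ℤ // ∀ k, Reg k x.1 x.2}
  choose m d p hp hd hs hk using fun x : St => exists_cover x.2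
  let next : St → St := fun x => ⟨(GrMod.ker (p x) (hp x), x.1.2 + 1), hk x⟩
  let s : ℕ → St := fun i => Nat.rec ⟨(GrMod.quot I hI, r), h⟩ (fun _ x => next x) i
  have hs1 : ∀ i, s (i + 1) = next (s i) := fun i => rfl
  have hr : ∀ i : ℕ, (s i).1.2 = r + i := by
    intro i
    induction i with
    | zero => exact (add_zero r).symm
    | succ i ih =>
      have : (s (i + 1)).1.2 = (s i).1.2 + 1 := rfl
      rw [this, ih]
      push_cast
      ring
  let q : ∀ i, (GrMod.free (d (s (i + 1))) : GrMod K n) →ₗ[R] GrMod.ker (p (s i)) (hp (s i)) :=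
    fun i => p (s (i + 1))
  have hq : ∀ i, IsGr (q i) := fun i => hp (s (i + 1))
  have hqs : ∀ i, Function.Surjective (q i) := fun i => hs (s (i + 1))
  let f : ∀ i, (GrMod.free (d (s (i + 1))) : GrMod K n) →ₗ[R] (GrMod.free (d (s i)) : GrMod K n) :=
    fun i => (LinearMap.ker (p (s i))).subtype.comp (q i)
  have hf : ∀ i, IsGr (f i) := fun i e v => congrArg Subtype.val (hq i e v)
  have hfe : ∀ i, Function.Exact (f i) (p (s i)) := by
    intro i y
    constructor
    · intro hy
      obtain ⟨v, hv⟩ := hqs i ⟨y, hy⟩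
      exact ⟨v, congrArg Subtype.val hv⟩
    · rintro ⟨v, rfl⟩
      exact (q i v).2
  refine ⟨{ rk := fun i => m (s i), dg := fun i => d (s i), dmap := f, aug := p (s 0),
            aug_surj := hs (s 0), exact0 := hfe 0, exactS := ?_, graded := ?_, aug_graded := ?_ }, ?_⟩
  · intro i y
    rw [← hfe (i + 1) y]
    show (q i y).1 = 0 ↔ q i y = 0
    exact ⟨fun h => Subtype.ext h, fun h => congrArg Subtype.val h⟩
  · intro i e v hv
    rw [isHomogVec_iff] at hv ⊢
    have := hf i e v
    rw [hv] at this
    exact this.symm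
  · intro e v hv
    rw [isHomogVec_iff] at hv
    rw [mem_quotComp_iff I hI]
    have := hp (s 0) e v
    rw [hv] at this
    exact this.symm
  · intro i j
    have h1 : d (s i) j ≤ (s i).1.2 := hd (s i) j
    rw [hr] at h1
    show d (s i) j - i ≤ r
    omega

theorem resBound_iff {I : Ideal R} (hI : IsStable I) (r : ℤ) :
    ResBound K (Fin n) I r ↔ ∀ k, Reg k (GrMod.quot I hI) r :=
  ⟨fun h k => reg_of_resBound hI h k, resBound_of_reg hI⟩

end Resolutions

/-! ### Bounds on the regularity -/

section Bounds
variable {K : Type} [Field K] {n : ℕ}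

local notation "R" => MvPoly K (Fin n)

theorem hc_mem_maxIdeal (e : ℤ) (he : 0 < e) (p : R) : hc (fun _ => 1) e p ∈ maxIdeal K (Fin n) := by
  classical
  have h1 : maxIdeal K (Fin n) = Ideal.span (mono K '' Set.range fun i => Finsupp.single i 1) := by
    rw [maxIdeal, ← Set.range_comp]
    rfl
  rw [h1, mem_span_mono]
  intro a ha
  rw [mem_support_iff, coeff_hc, weight_one] at ha
  have hd : (a.degree : ℤ) = e := by
    by_contra h
    rw [if_neg h] at ha
    exact ha rfl
  have : a ≠ 0 := by
    rintro rfl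
    simp at hd
    omega
  obtain ⟨x, hx⟩ := Finsupp.ne_iff.1 this
  refine ⟨_, ⟨x, rfl⟩, ?_⟩
  rw [Finsupp.single_le_iff]
  have : a x ≠ 0 := hx
  omega

/-- If `R/I ≠ 0` then its generators cannot all lie in negative degrees. -/
theorem nonneg_of_reg {I : Ideal R} (hI : IsStable I) (hm : I ≤ maxIdeal K (Fin n)) {r : ℤ}
    (h : Reg 1 (GrMod.quot I hI) r) : 0 ≤ r := by
  classical
  obtain ⟨ι, hι, d, hd, p, hp, hs, -⟩ := h
  by_contra hr
  apply maxIdeal_ne_top (K := K) (n := n)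
  rw [Ideal.eq_top_iff_one]
  obtain ⟨v, hv⟩ := hs (Ideal.Quotient.mk I 1)
  have h1 : hc (fun _ => 1) 0 (1 : R) = 1 := by
    have : (1 : R) = monomial 0 1 := rfl
    rw [this, hc_monomial, if_pos (by simp)]
  have h2 : p ((GrMod.free d : GrMod K n).c 0 v) = Ideal.Quotient.mk I 1 := by
    rw [hp, hv]
    show qc I hI _ 0 _ = _
    rw [qc_mk, h1]
  rw [linearMap_eq_freeHom d _ p, freeHom_apply] at h2
  choose g hg using fun j => Ideal.Quotient.mk_surjective (I := I) (p (Pi.single j 1 : ι → R))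
  have h3 : Ideal.Quotient.mk I (∑ j, hc (fun _ => 1) (0 - d j) (v j) * g j) =
      Ideal.Quotient.mk I 1 := by
    rw [← h2, map_sum]
    refine Finset.sum_congr rfl fun j _ => ?_
    rw [← hg]
    rfl
  have h4 := hm (Ideal.Quotient.eq.1 h3.symm)
  rw [← sub_add_cancel (1 : R) (∑ j, hc (fun _ => 1) (0 - d j) (v j) * g j)]
  refine Ideal.add_mem _ h4 (Ideal.sum_mem _ fun j _ => Ideal.mul_mem_right _ _ ?_)
  refine hc_mem_maxIdeal _ ?_ _
  have := hd j
  omega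

theorem colon_span_mono (S : Set (Fin n →₀ ℕ)) (b : Fin n →₀ ℕ) :
    (Ideal.span (mono K '' S)).colon (Ideal.span {mono K b}) =
      Ideal.span (mono K '' ((fun s => s - b) '' S)) := by
  ext p
  rw [mem_colon_span, mul_mono_mem, mem_span_mono]
  simp only [Set.exists_mem_image, tsub_le_iff_right]

theorem span_mono_insert (S : Set (Fin n →₀ ℕ)) (b : Fin n →₀ ℕ) :
    Ideal.span (mono K '' insert b S) = Ideal.span (mono K '' S) + Ideal.span {mono K b} := by
  rw [Set.image_insert_eq, Ideal.span_insert, sup_comm]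
  rfl

/-- `R/0` is free on one generator of degree zero. -/
theorem reg_bot (k : ℕ) (h : IsStable (⊥ : Ideal R)) : Reg k (GrMod.quot ⊥ h) 0 := by
  let d : Unit → ℤ := fun _ => 0
  let t : (GrMod.free d : GrMod K n) →ₗ[R] GrMod.quot ⊥ h :=
    (Submodule.mkQ (⊥ : Ideal R)).comp (LinearMap.proj (φ := fun _ : Unit => R) ())
  refine Reg.iso (A := GrMod.free d) t ?_ ⟨?_, ?_⟩ (Reg.free d fun j => le_refl _)
  · intro e v
    show Ideal.Quotient.mk ⊥ (hc _ (e - 0) (v ())) = qc ⊥ h _ e (Ideal.Quotient.mk ⊥ (v ()))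
    rw [qc_mk, sub_zero]
  · intro u v huv
    funext j
    have : Ideal.Quotient.mk ⊥ (u ()) = Ideal.Quotient.mk ⊥ (v ()) := huv
    rw [Ideal.Quotient.eq, Ideal.mem_bot, sub_eq_zero] at this
    exact this
  · intro y
    obtain ⟨p, rfl⟩ := Ideal.Quotient.mk_surjective y
    exact ⟨fun _ => p, rfl⟩

/-- Finitely generated monomial ideals have finite regularity, by induction on the number of
generators along `0 → R/(I : m)(-deg m) → R/I → R/(I + (m)) → 0`. -/
theorem exists_reg (N : ℕ) : ∀ S : Finset (Fin n →₀ ℕ), S.card ≤ N →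
    ∃ r : ℤ, ∀ k, Reg k (GrMod.quot (Ideal.span (mono K '' (S : Set (Fin n →₀ ℕ))))
      (isStable_span _)) r := by
  classical
  induction N with
  | zero =>
    intro S hS
    have : S = ∅ := Finset.card_eq_zero.1 (Nat.le_zero.1 hS)
    subst this
    refine ⟨0, fun k => (reg_bot k ?_).congr_quot _ _ ?_⟩
    · intro w e p hp
      rw [Ideal.mem_bot] at hp ⊢
      rw [hp, map_zero]
    · simp
  | succ N ih =>
    intro S hS
    rcases S.eq_empty_or_nonempty with rfl | ⟨b, hb⟩
    · exact ih ∅ (by simp)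
    · have hcard : (S.erase b).card ≤ N := by
        rw [Finset.card_erase_of_mem hb]; omega
      obtain ⟨r, hr⟩ := ih (S.erase b) hcard
      obtain ⟨t, ht⟩ := ih ((S.erase b).image fun s => s - b) (Finset.card_image_le.trans hcard)
      refine ⟨max r (t + b.degree - 1), fun k => ?_⟩
      have hS' : Ideal.span (mono K '' (S : Set (Fin n →₀ ℕ))) =
          Ideal.span (mono K '' ((S.erase b : Finset _) : Set (Fin n →₀ ℕ))) +
            Ideal.span {mono K b} := by
        rw [← span_mono_insert, ← Finset.coe_insert, Finset.insert_erase hb]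
      have hst := isStable_span (K := K) (S : Set (Fin n →₀ ℕ))
      rw [hS'] at hst
      refine Reg.pred ((reg_add (t := t) (isStable_span _) b hst
        ((hr (k + 1)).mono (le_max_left _ _)) ((ht k).congr_quot _ _ ?_) ?_).congr_quot _ _ hS'.symm)
      · rw [colon_span_mono, Finset.coe_image]
      · have := le_max_right r (t + b.degree - 1)
        omega

theorem exists_resBound {I : Ideal R} (hI : IsSqfreeMonomialIdeal K I) :
    ∃ r, ResBound K (Fin n) I r := by
  obtain ⟨S, hS, rfl⟩ := hI
  have hfin : S.Finite := by
    refine Set.Finite.subset (Set.finite_Iic (Finsupp.equivFunOnFinite.symm fun _ => 1)) ?_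
    intro a ha i
    exact hS a ha i
  obtain ⟨r, hr⟩ := exists_reg (K := K) _ hfin.toFinset le_rfl
  refine ⟨r, (resBound_iff (isStable_span _) r).2 fun k => (hr k).congr_quot _ _ ?_⟩
  rw [hfin.coe_toFinset]

/-- Bounds for `I` that carry over to `J` with a shift by `c` compare the regularities, provided the
least bound for `I` exists. -/
theorem cmreg_le {I J : Ideal R} (c : ℤ) (hex : ∃ r, ResBound K (Fin n) I r)
    (hb : ∀ r, ResBound K (Fin n) I r → 0 ≤ r)
    (h : ∀ r, ResBound K (Fin n) I r → ResBound K (Fin n) J (r + c)) :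
    CMreg K (Fin n) J ≤ CMreg K (Fin n) I + (c : WithBot ℤ) := by
  classical
  have hmin : ∃ r, ResBound K (Fin n) I r ∧ ∀ s, ResBound K (Fin n) I s → r ≤ s :=
    Int.exists_least_of_bdd ⟨0, hb⟩ hex
  rw [CMreg, CMreg, dif_pos hmin]
  split_ifs with hJ
  · rw [← WithBot.coe_add, WithBot.coe_le_coe]
    exact hJ.choose_spec.2 _ (h _ hmin.choose_spec.1)
  · exact bot_le

/-- The zero module has every bound, so no least one. -/
theorem cmreg_top : CMreg K (Fin n) (⊤ : Ideal R) = ⊥ := by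
  have hst : IsStable (⊤ : Ideal R) := fun _ _ _ _ => Submodule.mem_top
  have h : ∀ r, ResBound K (Fin n) (⊤ : Ideal R) r := fun r =>
    (resBound_iff hst r).2 fun k => Reg.of_subsingleton
      (Ideal.Quotient.subsingleton_iff.2 rfl)
  rw [CMreg, dif_neg]
  rintro ⟨r, -, hr⟩
  have := hr (r - 1) (h _)
  omega


theorem IsSqfreeMonomialIdeal.isStable {I : Ideal R} (hI : IsSqfreeMonomialIdeal K I) : IsStable I := by
  obtain ⟨S, -, rfl⟩ := hI
  exact isStable_span S

theorem IsSqfreeMonomialIdeal.nonneg_of_resBound {I : Ideal R} (hI : IsSqfreeMonomialIdeal K I) (h : I ≠ ⊤)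
    (r : ℤ) (hr : ResBound K (Fin n) I r) : 0 ≤ r := by
  refine nonneg_of_reg hI.isStable ?_ ((resBound_iff hI.isStable r).1 hr 1)
  obtain ⟨S, -, rfl⟩ := hI
  exact span_mono_le_maxIdeal S h

theorem cmreg_colon_le {I : Ideal R} (hI : IsSqfreeMonomialIdeal K I) (b : Fin n →₀ ℕ) :
    CMreg K (Fin n) (I.colon (Ideal.span {mono K b})) ≤ CMreg K (Fin n) I := by
  by_cases h : I = ⊤
  · have : I.colon (Ideal.span {mono K b}) = ⊤ := by
      rw [Ideal.eq_top_iff_one, mem_colon_span, h]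
      trivial
    rw [this, cmreg_top]
    exact bot_le
  · have := cmreg_le (J := I.colon (Ideal.span {mono K b})) 0 (exists_resBound hI)
      (hI.nonneg_of_resBound h) fun r hr => by
        rw [add_zero]
        exact (resBound_iff (hI.isStable.colon b) r).2 fun k =>
          reg_colon b hI.isStable ((resBound_iff hI.isStable r).1 hr k)
    simpa using this

theorem cmreg_add_le {I : Ideal R} (hI : IsSqfreeMonomialIdeal K I) (b : Fin n →₀ ℕ) :
    CMreg K (Fin n) (I + Ideal.span {mono K b}) ≤
      CMreg K (Fin n) I + (((b.degree : ℤ) - 1 : ℤ) : WithBot ℤ) := by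
  by_cases h : I = ⊤ ∨ b = 0
  · have : I + Ideal.span {mono K b} = ⊤ := by
      rw [Ideal.eq_top_iff_one]
      rcases h with rfl | rfl
      · exact (le_sup_left : ⊤ ≤ ⊤ + Ideal.span {mono K b}) Submodule.mem_top
      · exact (le_sup_right : _ ≤ I + Ideal.span {mono K 0}) (Ideal.mem_span_singleton_self _)
    rw [this, cmreg_top]
    exact bot_le
  · push Not at h
    have hb : b.degree ≠ 0 := fun h0 => h.2 ((Finsupp.degree_eq_zero_iff b).1 h0)
    have hst : IsStable (I + Ideal.span {mono K b}) := by
      obtain ⟨S, -, rfl⟩ := hI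
      rw [← span_mono_insert]
      exact isStable_span _
    refine cmreg_le _ (exists_resBound hI) (hI.nonneg_of_resBound h.1) fun r hr => ?_
    have hr' := (resBound_iff hI.isStable r).1 hr
    refine (resBound_iff hst _).2 fun k => Reg.pred ?_
    refine reg_add (t := r) hI.isStable b hst ((hr' (k + 1)).mono ?_)
      (reg_colon b hI.isStable (hr' k)) ?_ <;> omega

theorem degree_sqExp (T : Finset (Fin n)) : (sqExp T).degree = T.card := by
  classical
  rw [Finsupp.degree_eq_sum]
  simp [sqExp_apply]

end Bounds

/-- for a squarefree monomial ideal `I` and a squarefree monomial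
`f = x_{i_1} ⋯ x_{i_k}`, the five listed (mutually equivalent) conditions all hold. -/
theorem stmt2 (K : Type) [Field K] (n : ℕ) (I : Ideal (MvPoly K (Fin n)))
    (hI : IsSqfreeMonomialIdeal K I) (T : Finset (Fin n)) (k : ℕ) (hk : k = T.card)
    (f : MvPoly K (Fin n)) (hf : f = ∏ i ∈ T, MvPolynomial.X i) :
    (depthQ K (Fin n) (I + Ideal.span {f}) ≥ depthQ K (Fin n) I - 1) ∧
    (depthQ K (Fin n) I ≤ depthQ K (Fin n) (I.colon (Ideal.span {f}))) ∧
    (depthQ K (Fin n)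
        (I + Ideal.span ((fun i => (MvPolynomial.X i : MvPoly K (Fin n))) '' ↑T)) ≥
      depthQ K (Fin n) I - (k : ℕ∞)) ∧
    (CMreg K (Fin n) I ≥ CMreg K (Fin n) (I.colon (Ideal.span {f}))) ∧
    (CMreg K (Fin n) (I + Ideal.span {f}) ≤
      CMreg K (Fin n) I + (((k : ℤ) - 1 : ℤ) : WithBot ℤ)) := by
  subst hk
  rw [prod_X_eq_mono] at hf
  subst hf
  have h2 := depthQ_le_depthQ_colon I hI T
  refine ⟨depthQ_add_of_colon I _ h2, h2, depthQ_add_vars T I hI, cmreg_colon_le hI _, ?_⟩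
  have h5 := cmreg_add_le hI (sqExp T)
  rwa [degree_sqExp] at h5
end
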